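/- arXiv:1504.08282 — 3 statements merged into one kernel-verified Lean document; each statement's English description precedes it below -/
import Mathlib

section
/- Let Λ be an artin algebra and P the category of finitely generated right Λ-modules of finite projective dimension. If P is contravariantly finite in mod Λ, then the class P ∩ P^⊥ equals the class of Ext-injective modules in P, where P^⊥ = {M : Ext^i_Λ(N, M) = 0 for all N in P and all i > 0}. -/
open CategoryTheory

universe u

/-- The `n`-th Ext group of `A`-modules `M`, `N`. -/
noncomputable abbrev ext {A : Type u} [Ring A] (M N : ModuleCat.{u} A) (n : ℕ) : Type u :=
  ((Ext ℤ (ModuleCat.{u} A) n).obj (Opposite.op M)).obj N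

/-- `Ext^i(N, M) = 0` for all `i > 0`. -/
def ExtVanish {A : Type u} [Ring A] (N M : ModuleCat.{u} A) : Prop :=
  ∀ i, 0 < i → Subsingleton (ext N M i)

/-- `M` has projective dimension at most `n`, i.e. `Ext^i(M, -) = 0` for `i > n`. -/
def pdLE {A : Type u} [Ring A] (M : ModuleCat.{u} A) (n : ℕ) : Prop :=
  ∀ i, n < i → ∀ N : ModuleCat.{u} A, Subsingleton (ext M N i)

/-- The projective dimension of `M`, as an element of `ℕ∞` (`⊤` if infinite). -/
noncomputable def projDim {A : Type u} [Ring A] (M : ModuleCat.{u} A) : ℕ∞ :=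
  sInf {d : ℕ∞ | ∃ n : ℕ, d = n ∧ pdLE M n}

/-- Membership in `𝒫`: finitely generated of finite projective dimension. -/
def InP {A : Type u} [Ring A] (M : ModuleCat.{u} A) : Prop :=
  Module.Finite A M ∧ ∃ n, pdLE M n

/-- The finitistic dimension of `A`. -/
noncomputable def findim (A : Type u) [Ring A] : ℕ∞ :=
  sSup {d : ℕ∞ | ∃ M : ModuleCat.{u} A, InP M ∧ d = projDim M}

/-- `M` is a direct summand of `S`. -/
def IsSummand {A : Type u} [Ring A] (M S : ModuleCat.{u} A) : Prop :=
  ∃ (s : M →ₗ[A] S) (r : S →ₗ[A] M), r ∘ₗ s = LinearMap.id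

/-- `M` belongs to `add 𝒳`: `M` is a direct summand of a finite direct sum of objects of `𝒳`. -/
def InAddOf {A : Type u} [Ring A] (X : ModuleCat.{u} A → Prop) (M : ModuleCat.{u} A) : Prop :=
  ∃ (k : ℕ) (F : Fin k → ModuleCat.{u} A), (∀ i, X (F i)) ∧
    IsSummand M (ModuleCat.of A (DirectSum (Fin k) (fun i => ↥(F i))))

/-- `M` belongs to `Add T`: `M` is a direct summand of an arbitrary direct sum of copies of `T`. -/
def InAdd {A : Type u} [Ring A] (T M : ModuleCat.{u} A) : Prop :=
  ∃ ι : Type u, IsSummand M (ModuleCat.of A (DirectSum ι (fun _ => ↥T)))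

/-- `M ∈ 𝒳^⊥`: `Ext^i(N, M) = 0` for all `N ∈ 𝒳` and `i > 0`. -/
def InPerpOf {A : Type u} [Ring A] (X : ModuleCat.{u} A → Prop) (M : ModuleCat.{u} A) : Prop :=
  ∀ N, X N → ExtVanish N M

/-- `M` is Ext-injective in `𝒫`: `M ∈ 𝒫` and `Ext^1(N, M) = 0` for all `N ∈ 𝒫`. -/
def ExtInjInP {A : Type u} [Ring A] (M : ModuleCat.{u} A) : Prop :=
  InP M ∧ ∀ N : ModuleCat.{u} A, InP N → Subsingleton (ext N M 1)

/-- `M` is splitting injective in `𝒳`: every injective map `M → Y` with `Y ∈ add 𝒳` splits. -/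
def SplittingInjIn {A : Type u} [Ring A] (X : ModuleCat.{u} A → Prop)
    (M : ModuleCat.{u} A) : Prop :=
  ∀ Y : ModuleCat.{u} A, InAddOf X Y → ∀ f : M →ₗ[A] Y, Function.Injective f →
    ∃ r : Y →ₗ[A] M, r ∘ₗ f = LinearMap.id

/-- `0 → M₁ → M₂ → M₃ → 0` is a short exact sequence. -/
def ShortExact {A : Type u} [Ring A] {M₁ M₂ M₃ : ModuleCat.{u} A}
    (f : M₁ →ₗ[A] M₂) (g : M₂ →ₗ[A] M₃) : Prop :=
  Function.Injective f ∧ Function.Exact f g ∧ Function.Surjective g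

/-- `f : XM → M` is a right `𝒳`-approximation of `M`. -/
def IsRightApprox {A : Type u} [Ring A] (X : ModuleCat.{u} A → Prop)
    {XM M : ModuleCat.{u} A} (f : XM →ₗ[A] M) : Prop :=
  X XM ∧ ∀ Y : ModuleCat.{u} A, X Y → ∀ g : Y →ₗ[A] M, ∃ h : Y →ₗ[A] XM, f ∘ₗ h = g

/-- `f : XM → M` is a minimal right `𝒳`-approximation. -/
def IsMinimalRightApprox {A : Type u} [Ring A] (X : ModuleCat.{u} A → Prop)
    {XM M : ModuleCat.{u} A} (f : XM →ₗ[A] M) : Prop :=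
  IsRightApprox X f ∧ ∀ g : XM →ₗ[A] XM, f ∘ₗ g = f → Function.Bijective g

/-- `𝒳` is contravariantly finite in `mod A`. -/
def ContravariantlyFinite {A : Type u} [Ring A] (X : ModuleCat.{u} A → Prop) : Prop :=
  ∀ M : ModuleCat.{u} A, Module.Finite A M →
    ∃ (XM : ModuleCat.{u} A) (f : XM →ₗ[A] M), IsRightApprox X f

/-- `M` is an indecomposable module: nonzero, and its only idempotent endomorphisms
are `0` and the identity. -/
def Indec {A : Type u} [Ring A] (M : ModuleCat.{u} A) : Prop :=
  (¬ Subsingleton M) ∧ ∀ e : M →ₗ[A] M, e ∘ₗ e = e → e = 0 ∨ e = LinearMap.id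

/-- `L` admits a finite coresolution `0 → L → C^0 → ⋯ → C^n → 0` with all `C^i ∈ add T`. -/
def HasAddCoresolution {A : Type u} [Ring A] (T L : ModuleCat.{u} A) : Prop :=
  ∃ (C : ℕ → ModuleCat.{u} A) (d : ∀ i, C i →ₗ[A] C (i+1)) (f : L →ₗ[A] C 0),
    Function.Injective f ∧ Function.Exact f (d 0) ∧
    (∀ i, Function.Exact (d i) (d (i+1))) ∧
    (∀ i, InAddOf (fun X => X = T) (C i)) ∧
    (∃ m, ∀ i, m ≤ i → Subsingleton (C i))

/-- `T` is a tilting `A`-module. -/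
def IsTilting {A : Type u} [Ring A] (T : ModuleCat.{u} A) : Prop :=
  Module.Finite A T ∧ (∃ n, pdLE T n) ∧ ExtVanish T T ∧
    HasAddCoresolution T (ModuleCat.of A A)

/-- `𝒳` is a resolving subcategory of `mod A`. -/
def Resolving {A : Type u} [Ring A] (X : ModuleCat.{u} A → Prop) : Prop :=
  (∀ M : ModuleCat.{u} A, Module.Finite A M → Module.Projective A M → X M) ∧
  (∀ (M₁ M₂ M₃ : ModuleCat.{u} A) (f : M₁ →ₗ[A] M₂) (g : M₂ →ₗ[A] M₃),
      ShortExact f g → X M₁ → X M₃ → X M₂) ∧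
  (∀ (M₁ M₂ M₃ : ModuleCat.{u} A) (f : M₁ →ₗ[A] M₂) (g : M₂ →ₗ[A] M₃),
      ShortExact f g → X M₂ → X M₃ → X M₁)

/-- `F` is a complete irredundant family of representatives of the isomorphism classes of
indecomposable Ext-injective modules in `𝒫`. -/
def IsCompleteExtInjFamily {A : Type u} [Ring A] {ι : Type u}
    (F : ι → ModuleCat.{u} A) : Prop :=
  (∀ i, Indec (F i) ∧ ExtInjInP (F i)) ∧
  (∀ M : ModuleCat.{u} A, Indec M → ExtInjInP M → ∃ i, Nonempty (M ≃ₗ[A] F i)) ∧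
  (∀ i j, Nonempty (F i ≃ₗ[A] F j) → i = j)

/-- `I` is a complete set of pairwise non-isomorphic indecomposable injective modules. -/
def IsCompleteIndecInjFamily {A : Type u} [Ring A] {n : ℕ}
    (I : Fin n → ModuleCat.{u} A) : Prop :=
  (∀ j, Module.Finite A (I j) ∧ Module.Injective A (I j) ∧ Indec (I j)) ∧
  (∀ M : ModuleCat.{u} A, Module.Finite A M → Module.Injective A M → Indec M →
      ∃ j, Nonempty (M ≃ₗ[A] I j)) ∧
  (∀ j k, Nonempty (I j ≃ₗ[A] I k) → j = k)


namespace CategoryTheory.ProjectiveResolution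

open Limits

variable {C : Type*} [Category* C] [Abelian C] {X : C}

/-- `Ext^{n+1}(X, Y)` vanishes iff every `(n+1)`-cocycle on a projective resolution of `X`
with values in `Y` is a coboundary. -/
lemma subsingleton_ext_succ_iff [EnoughProjectives C] (R : Type*) [Ring R] [Linear R C]
    (P : ProjectiveResolution X) (Y : C) (n : ℕ) :
    Subsingleton (((_root_.Ext R C (n + 1)).obj (Opposite.op X)).obj Y) ↔
      ∀ f : P.complex.X (n + 1) ⟶ Y, P.complex.d (n + 2) (n + 1) ≫ f = 0 →
        ∃ g : P.complex.X n ⟶ Y, P.complex.d (n + 1) n ≫ g = f := by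
  rw [← ModuleCat.isZero_iff_subsingleton, (P.isoExt (n + 1) Y).isZero_iff,
    ← HomologicalComplex.exactAt_iff_isZero_homology,
    HomologicalComplex.exactAt_iff' _ n (n + 1) (n + 2) (by simp) (by simp),
    ShortComplex.moduleCat_exact_iff]
  exact Iff.rfl

/-- `Ext^{n+1}(X, Y)`, computed in the derived category, vanishes iff every `(n+1)`-cocycle on a
projective resolution of `X` with values in `Y` is a coboundary. -/
lemma subsingleton_abelian_ext_succ_iff [HasExt C] (P : ProjectiveResolution X) (Y : C) (n : ℕ) :
    Subsingleton (Abelian.Ext X Y (n + 1)) ↔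
      ∀ f : P.complex.X (n + 1) ⟶ Y, P.complex.d (n + 2) (n + 1) ≫ f = 0 →
        ∃ g : P.complex.X n ⟶ Y, P.complex.d (n + 1) n ≫ g = f := by
  refine ⟨fun _ f hf ↦ (P.extMk_eq_zero_iff f (n + 2) rfl hf n rfl).1 (Subsingleton.elim _ _),
    fun h ↦ subsingleton_of_forall_eq 0 fun α ↦ ?_⟩
  obtain ⟨f, hf, rfl⟩ := P.extMk_surjective α (n + 2) rfl
  exact (P.extMk_eq_zero_iff f (n + 2) rfl hf n rfl).2 (h f hf)

end CategoryTheory.ProjectiveResolution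

lemma subsingleton_ext_succ_iff_abelian {A : Type u} [Ring A] (M N : ModuleCat.{u} A) (n : ℕ) :
    Subsingleton (ext M N (n + 1)) ↔ Subsingleton (Abelian.Ext M N (n + 1)) :=
  ((projectiveResolution M).subsingleton_ext_succ_iff ℤ N n).trans
    ((projectiveResolution M).subsingleton_abelian_ext_succ_iff N n).symm

/-- Dimension shifting along a short exact sequence with projective middle term. -/
lemma CategoryTheory.ShortComplex.ShortExact.subsingleton_ext_X₁_iff {C : Type*} [Category* C]
    [Abelian C] [HasExt C] {S : ShortComplex C} (hS : S.ShortExact) [Projective S.X₂] (Y : C)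
    (n : ℕ) :
    Subsingleton (Abelian.Ext S.X₁ Y (n + 1)) ↔ Subsingleton (Abelian.Ext S.X₃ Y (n + 2)) := by
  constructor
  · refine fun _ ↦ subsingleton_of_forall_eq 0 fun α ↦ ?_
    obtain ⟨β, rfl⟩ := Abelian.Ext.contravariant_sequence_exact₃ hS Y α
      (Abelian.Ext.eq_zero_of_projective _) (show 1 + (n + 1) = n + 2 by lia)
    rw [Subsingleton.elim β 0, Abelian.Ext.comp_zero]
  · refine fun _ ↦ subsingleton_of_forall_eq 0 fun α ↦ ?_
    obtain ⟨β, rfl⟩ := Abelian.Ext.contravariant_sequence_exact₁ hS Y α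
      (show 1 + (n + 1) = n + 2 by lia) (Subsingleton.elim _ _)
    rw [Abelian.Ext.eq_zero_of_projective β, Abelian.Ext.comp_zero]

/-- Every module in `𝒫` over a Noetherian ring has a syzygy in `𝒫`, along which the
positive `Ext` groups shift by one degree. -/
lemma InP.exists_syzygy {A : Type u} [Ring A] [IsNoetherianRing A] {N : ModuleCat.{u} A}
    (hN : InP N) :
    ∃ K : ModuleCat.{u} A, InP K ∧ ∀ (M : ModuleCat.{u} A) (n : ℕ),
      Subsingleton (ext K M (n + 1)) ↔ Subsingleton (ext N M (n + 2)) := by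
  obtain ⟨_, d, hd⟩ := hN
  obtain ⟨k, f, hf⟩ := Module.Finite.exists_fin' A N
  let S : ShortComplex (ModuleCat.{u} A) :=
    .mk (ModuleCat.ofHom (LinearMap.ker f).subtype) (ModuleCat.ofHom f) (by ext x; exact x.2)
  have hS : S.ShortExact :=
    { exact := (ShortComplex.moduleCat_exact_iff _).2 fun x hx ↦ ⟨⟨x, hx⟩, rfl⟩
      mono_f := (ModuleCat.mono_iff_injective _).2 (Submodule.injective_subtype _)
      epi_g := (ModuleCat.epi_iff_surjective _).2 hf }
  have : Projective S.X₂ := ModuleCat.projective_of_free (Pi.basisFun A (Fin k))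
  have shift (M : ModuleCat.{u} A) (n : ℕ) :
      Subsingleton (ext S.X₁ M (n + 1)) ↔ Subsingleton (ext N M (n + 2)) := by
    rw [subsingleton_ext_succ_iff_abelian, subsingleton_ext_succ_iff_abelian]
    exact hS.subsingleton_ext_X₁_iff M n
  refine ⟨S.X₁, ⟨inferInstanceAs (Module.Finite A (LinearMap.ker f)), d, fun i hi M ↦ ?_⟩, shift⟩
  obtain ⟨n, rfl⟩ : ∃ n, i = n + 1 := ⟨i - 1, by lia⟩
  exact (shift M n).2 (hd _ (by lia) M)

/-- Over a Noetherian ring, Ext-injective modules in `𝒫` belong to `𝒫^⊥`. -/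
lemma ExtInjInP.inPerpOf {A : Type u} [Ring A] [IsNoetherianRing A] {M : ModuleCat.{u} A}
    (hM : ExtInjInP M) : InPerpOf InP M := by
  intro N hN i hi
  obtain ⟨n, rfl⟩ : ∃ n, i = n + 1 := ⟨i - 1, by lia⟩
  clear hi
  induction n generalizing N with
  | zero => exact hM.2 N hN
  | succ n ih =>
    obtain ⟨K, hK, shift⟩ := hN.exists_syzygy
    exact (shift M n).1 (ih K hK)

/-- If `𝒫` is contravariantly finite, then `𝒫 ∩ 𝒫^⊥` is exactly the class of
Ext-injective modules in `𝒫`. -/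
theorem stmt_1 (Λ : Type u) [Ring Λ] (R : Type u) [CommRing R] [IsArtinianRing R]
    [Algebra R Λ] [Module.Finite R Λ]
    (hcf : ContravariantlyFinite (fun M : ModuleCat.{u} Λᵐᵒᵖ => InP M)) :
    ∀ M : ModuleCat.{u} Λᵐᵒᵖ, (InP M ∧ InPerpOf InP M) ↔ ExtInjInP M := by
  have : IsNoetherian R Λᵐᵒᵖ := isNoetherian_of_linearEquiv (MulOpposite.opLinearEquiv R)
  have : IsNoetherianRing Λᵐᵒᵖ := isNoetherian_of_tower R inferInstance
  exact fun M ↦ ⟨fun h ↦ ⟨h.1, fun N hN ↦ h.2 N hN 1 one_pos⟩, fun h ↦ ⟨h.1, h.inPerpOf⟩⟩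
end

section
/- Let Λ be an artin algebra and P the class of finitely generated right Λ-modules of finite projective dimension. If P is contravariantly finite in mod Λ, then the direct sum E of a complete set of representatives of the isomorphism classes of indecomposable Ext-injective modules in P is a tilting Λ-module. -/
open CategoryTheory

universe u

section ExtGroups

variable {A : Type u} [Ring A]

lemma subsingleton_ext_iff (M N : ModuleCat.{u} A) (n : ℕ) :
    Subsingleton (ext M N (n + 1)) ↔ Subsingleton (Abelian.Ext.{u} M N (n + 1)) := by
  let P := projectiveResolution M
  have h1 : Subsingleton (ext M N (n + 1)) ↔
      ∀ f : P.complex.X (n + 1) ⟶ N, P.complex.d (n + 2) (n + 1) ≫ f = 0 →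
        ∃ g : P.complex.X n ⟶ N, P.complex.d (n + 1) n ≫ g = f := by
    rw [← ModuleCat.isZero_iff_subsingleton, (P.isoExt (R := ℤ) (n + 1) N).isZero_iff,
      ← HomologicalComplex.exactAt_iff_isZero_homology,
      HomologicalComplex.exactAt_iff' _ n (n + 1) (n + 2) (by simp) (by simp),
      ShortComplex.moduleCat_exact_iff]
    rfl
  rw [h1]
  constructor
  · refine fun h => subsingleton_of_forall_eq 0 fun x => ?_
    obtain ⟨f, hf, rfl⟩ := P.extMk_surjective x (n + 2) rfl
    rw [P.extMk_eq_zero_iff f (n + 2) rfl hf n rfl]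
    exact h f hf
  · intro h f hf
    rw [← P.extMk_eq_zero_iff f (n + 2) rfl hf n rfl]
    exact Subsingleton.elim _ _

lemma pdLE_iff_hasProjectiveDimensionLT (M : ModuleCat.{u} A) (n : ℕ) :
    pdLE M n ↔ HasProjectiveDimensionLT M (n + 1) := by
  rw [hasProjectiveDimensionLT_iff.{u}]
  constructor
  · intro h i hi Y e
    obtain ⟨j, rfl⟩ := Nat.exists_eq_add_of_le' (show 1 ≤ i by omega)
    have := (subsingleton_ext_iff M Y j).1 (h (j + 1) (by omega) Y)
    exact Subsingleton.elim _ _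
  · intro h i hi Y
    obtain ⟨j, rfl⟩ := Nat.exists_eq_add_of_le' (show 1 ≤ i by omega)
    exact (subsingleton_ext_iff M Y j).2 (subsingleton_of_forall_eq 0 fun e => h _ (by omega) e)

variable {M₁ M₂ M₃ : ModuleCat.{u} A} {f : M₁ →ₗ[A] M₂} {g : M₂ →ₗ[A] M₃}

/-- The short complex in `ModuleCat A` attached to a short exact sequence. -/
abbrev ShortExact.shortComplex (h : ShortExact f g) : ShortComplex (ModuleCat.{u} A) :=
  ShortComplex.mk (ModuleCat.ofHom f) (ModuleCat.ofHom g) (by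
    ext x
    exact h.2.1.apply_apply_eq_zero x)

lemma ShortExact.shortExact_shortComplex (h : ShortExact f g) : h.shortComplex.ShortExact where
  exact := (ShortComplex.moduleCat_exact_iff_range_eq_ker _).2 h.2.1.linearMap_ker_eq.symm
  mono_f := (ModuleCat.mono_iff_injective _).2 h.1
  epi_g := (ModuleCat.epi_iff_surjective _).2 h.2.2

lemma shortExact_ker (g : M₂ →ₗ[A] M₃) (hg : Function.Surjective g) :
    ShortExact (M₁ := ModuleCat.of A (LinearMap.ker g)) (LinearMap.ker g).subtype g :=
  ⟨Subtype.val_injective, LinearMap.exact_subtype_ker_map g, hg⟩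

lemma shortExact_quotient (f : M₁ →ₗ[A] M₂) (hf : Function.Injective f) :
    ShortExact (M₃ := ModuleCat.of A (M₂ ⧸ LinearMap.range f)) f (LinearMap.range f).mkQ :=
  ⟨hf, LinearMap.exact_map_mkQ_range f, Submodule.mkQ_surjective _⟩

/-- `Ext^i(N, K) = 0`, phrased with Mathlib's derived category `Ext`. -/
abbrev ExtZero (N K : ModuleCat.{u} A) (i : ℕ) : Prop := Subsingleton (Abelian.Ext.{u} N K i)

lemma ShortExact.extZero_mid_right (h : ShortExact f g) {N : ModuleCat.{u} A} {i : ℕ}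
    (h₁ : ExtZero N M₁ i) (h₃ : ExtZero N M₃ i) : ExtZero N M₂ i := by
  refine subsingleton_of_forall_eq 0 fun x => ?_
  obtain ⟨y, rfl⟩ := Abelian.Ext.covariant_sequence_exact₂ N h.shortExact_shortComplex x
    (h₃.elim _ _)
  rw [show y = 0 from h₁.elim _ _]; simp

lemma ShortExact.extZero_right_right (h : ShortExact f g) {N : ModuleCat.{u} A} {i : ℕ}
    (h₂ : ExtZero N M₂ i) (h₁ : ExtZero N M₁ (i + 1)) : ExtZero N M₃ i := by
  refine subsingleton_of_forall_eq 0 fun x => ?_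
  obtain ⟨y, rfl⟩ := Abelian.Ext.covariant_sequence_exact₃ N h.shortExact_shortComplex x rfl
    (h₁.elim _ _)
  rw [show y = 0 from h₂.elim _ _]; simp

lemma ShortExact.extZero_right_left (h : ShortExact f g) {K : ModuleCat.{u} A} {i : ℕ}
    (h₁ : ExtZero M₁ K i) (h₂ : ExtZero M₂ K (i + 1)) : ExtZero M₃ K (i + 1) := by
  refine subsingleton_of_forall_eq 0 fun x => ?_
  obtain ⟨y, rfl⟩ := Abelian.Ext.contravariant_sequence_exact₃ h.shortExact_shortComplex K x
    (h₂.elim _ _) (add_comm 1 i)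
  rw [show y = 0 from h₁.elim _ _]; simp

lemma ShortExact.exists_lift (h : ShortExact f g) {N : ModuleCat.{u} A} (h₁ : ExtZero N M₁ 1)
    (φ : N →ₗ[A] M₃) : ∃ ψ : N →ₗ[A] M₂, g ∘ₗ ψ = φ := by
  obtain ⟨y, hy⟩ := Abelian.Ext.covariant_sequence_exact₃ N h.shortExact_shortComplex
    (Abelian.Ext.mk₀ (ModuleCat.ofHom φ)) rfl (h₁.elim _ _)
  obtain ⟨ψ, rfl⟩ := (Abelian.Ext.mk₀_bijective _ _).2 y
  rw [Abelian.Ext.mk₀_comp_mk₀] at hy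
  exact ⟨ψ.hom, congrArg ModuleCat.Hom.hom ((Abelian.Ext.mk₀_bijective _ _).1 hy)⟩

lemma ShortExact.exists_extend (h : ShortExact f g) {K : ModuleCat.{u} A} (h₃ : ExtZero M₃ K 1)
    (φ : M₁ →ₗ[A] K) : ∃ ψ : M₂ →ₗ[A] K, ψ ∘ₗ f = φ := by
  obtain ⟨y, hy⟩ := Abelian.Ext.contravariant_sequence_exact₁ h.shortExact_shortComplex K
    (Abelian.Ext.mk₀ (ModuleCat.ofHom φ)) rfl (h₃.elim _ _)
  obtain ⟨ψ, rfl⟩ := (Abelian.Ext.mk₀_bijective _ _).2 y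
  rw [Abelian.Ext.mk₀_comp_mk₀] at hy
  exact ⟨ψ.hom, congrArg ModuleCat.Hom.hom ((Abelian.Ext.mk₀_bijective _ _).1 hy)⟩

lemma extZero_of_projective (Q K : ModuleCat.{u} A) [Module.Projective A Q] (i : ℕ) :
    ExtZero Q K (i + 1) := by
  have := (IsProjective.iff_projective Q).1 ‹_›
  exact subsingleton_of_forall_eq 0 fun x => Abelian.Ext.eq_zero_of_projective x

lemma ShortExact.extZero_one_of_extend (h : ShortExact f g) [Module.Projective A M₂]
    {K : ModuleCat.{u} A} (H : ∀ φ : M₁ →ₗ[A] K, ∃ ψ : M₂ →ₗ[A] K, ψ ∘ₗ f = φ) :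
    ExtZero M₃ K 1 := by
  refine subsingleton_of_forall_eq 0 fun x => ?_
  obtain ⟨y, rfl⟩ := Abelian.Ext.contravariant_sequence_exact₃ h.shortExact_shortComplex K x
    ((extZero_of_projective M₂ K 0).elim _ _) (add_comm 1 0)
  obtain ⟨φ, rfl⟩ := (Abelian.Ext.mk₀_bijective _ _).2 y
  obtain ⟨ψ, hψ⟩ := H φ.hom
  have : φ = ModuleCat.ofHom f ≫ ModuleCat.ofHom ψ := by
    ext x; exact (LinearMap.congr_fun hψ x).symm
  rw [this, ← Abelian.Ext.mk₀_comp_mk₀, h.shortExact_shortComplex.extClass_comp_assoc]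

/-- A retraction of modules as a retract in `ModuleCat A`. -/
def retractOfLinear {M S : ModuleCat.{u} A} (s : M →ₗ[A] S) (r : S →ₗ[A] M)
    (h : r ∘ₗ s = LinearMap.id) : Retract M S where
  i := ModuleCat.ofHom s
  r := ModuleCat.ofHom r
  retract := by ext x; exact LinearMap.congr_fun h x

lemma IsSummand.hasProjectiveDimensionLT {M S : ModuleCat.{u} A} (h : IsSummand M S) {n : ℕ}
    (hS : HasProjectiveDimensionLT S n) : HasProjectiveDimensionLT M n := by
  obtain ⟨s, r, h⟩ := h
  exact (retractOfLinear s r h).hasProjectiveDimensionLT n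

lemma IsSummand.extZero {M S : ModuleCat.{u} A} (h : IsSummand M S) {N : ModuleCat.{u} A}
    {i : ℕ} (hS : ExtZero N S i) : ExtZero N M i := by
  obtain ⟨s, r, h⟩ := h
  refine subsingleton_of_forall_eq 0 fun x => ?_
  have e : (x.comp (Abelian.Ext.mk₀ (ModuleCat.ofHom s)) (add_zero i)).comp
      (Abelian.Ext.mk₀ (ModuleCat.ofHom r)) (add_zero i) = x := by
    rw [Abelian.Ext.comp_assoc_of_third_deg_zero, Abelian.Ext.mk₀_comp_mk₀,
      show ModuleCat.ofHom s ≫ ModuleCat.ofHom r = 𝟙 M from (retractOfLinear s r h).retract,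
      Abelian.Ext.comp_mk₀_id]
  rw [← e, show x.comp (Abelian.Ext.mk₀ (ModuleCat.ofHom s)) (add_zero i) = 0 from hS.elim _ _]
  simp

lemma IsSummand.finite {M S : ModuleCat.{u} A} (h : IsSummand M S) (hS : Module.Finite A S) :
    Module.Finite A M := by
  obtain ⟨s, r, h⟩ := h
  exact Module.Finite.of_surjective r fun x => ⟨s x, LinearMap.congr_fun h x⟩

end ExtGroups

section FiniteProjectiveDimension

variable {A : Type u} [Ring A]

lemma inP_iff (M : ModuleCat.{u} A) :
    InP M ↔ Module.Finite A M ∧ ∃ n, HasProjectiveDimensionLT M n := by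
  refine and_congr_right fun _ => ⟨fun ⟨n, hn⟩ => ⟨n + 1, ?_⟩, fun ⟨n, hn⟩ => ⟨n, ?_⟩⟩
  · exact (pdLE_iff_hasProjectiveDimensionLT M n).1 hn
  · exact (pdLE_iff_hasProjectiveDimensionLT M n).2
      (hasProjectiveDimensionLT_of_ge M n _ n.le_succ)

lemma extInjInP_iff (M : ModuleCat.{u} A) :
    ExtInjInP M ↔ InP M ∧ ∀ N, InP N → ExtZero N M 1 :=
  and_congr_right fun _ => forall₂_congr fun N _ => subsingleton_ext_iff N M 0

lemma InP.of_projective (M : ModuleCat.{u} A) [Module.Finite A M] [Module.Projective A M] :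
    InP M := by
  have := (IsProjective.iff_projective M).1 ‹_›
  exact (inP_iff M).2 ⟨‹_›, 1, inferInstance⟩

lemma InP.of_isSummand {M S : ModuleCat.{u} A} (hS : InP S) (h : IsSummand M S) : InP M := by
  obtain ⟨hf, n, hn⟩ := (inP_iff S).1 hS
  exact (inP_iff M).2 ⟨h.finite hf, n, h.hasProjectiveDimensionLT hn⟩

variable {M₁ M₂ M₃ : ModuleCat.{u} A} {f : M₁ →ₗ[A] M₂} {g : M₂ →ₗ[A] M₃}

lemma ShortExact.finite_mid (h : ShortExact f g) (h₁ : Module.Finite A M₁)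
    (h₃ : Module.Finite A M₃) : Module.Finite A M₂ := by
  refine ⟨Submodule.fg_of_fg_map_of_fg_inf_ker g ?_ ?_⟩
  · rw [Submodule.map_top, LinearMap.range_eq_top.2 h.2.2]
    exact h₃.1
  · rw [top_inf_eq, h.2.1.linearMap_ker_eq, LinearMap.range_eq_map]
    exact h₁.1.map f

lemma ShortExact.inP_mid (h : ShortExact f g) (h₁ : InP M₁) (h₃ : InP M₃) : InP M₂ := by
  rw [inP_iff] at *
  obtain ⟨hf₁, n₁, h₁⟩ := h₁
  obtain ⟨hf₃, n₃, h₃⟩ := h₃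
  exact ⟨h.finite_mid hf₁ hf₃, n₁ + n₃,
    h.shortExact_shortComplex.hasProjectiveDimensionLT_X₂ _
      (inferInstanceAs (HasProjectiveDimensionLT M₁ _))
      (inferInstanceAs (HasProjectiveDimensionLT M₃ _))⟩

lemma ShortExact.inP_right (h : ShortExact f g) (h₁ : InP M₁) (h₂ : InP M₂) : InP M₃ := by
  rw [inP_iff] at *
  obtain ⟨hf₁, n₁, h₁⟩ := h₁
  obtain ⟨hf₂, n₂, h₂⟩ := h₂
  exact ⟨Module.Finite.of_surjective g h.2.2, n₁ + n₂ + 1,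
    h.shortExact_shortComplex.hasProjectiveDimensionLT_X₃ _
      (inferInstanceAs (HasProjectiveDimensionLT M₁ _))
      (hasProjectiveDimensionLT_of_ge M₂ n₂ _ (by omega))⟩

lemma ShortExact.inP_left [IsNoetherianRing A] (h : ShortExact f g) (h₂ : InP M₂)
    (h₃ : InP M₃) : InP M₁ := by
  rw [inP_iff] at *
  obtain ⟨hf₂, n₂, h₂⟩ := h₂
  obtain ⟨hf₃, n₃, h₃⟩ := h₃
  exact ⟨Module.Finite.of_injective f h.1, n₂ + n₃,
    h.shortExact_shortComplex.hasProjectiveDimensionLT_X₁ _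
      (inferInstanceAs (HasProjectiveDimensionLT M₂ _))
      (hasProjectiveDimensionLT_of_ge M₃ n₃ _ (by omega))⟩

/-- A finitely generated module is the cokernel of an injection into a finite free module. -/
lemma exists_shortExact_free (N : ModuleCat.{u} A) [Module.Finite A N] :
    ∃ (n : ℕ) (L : ModuleCat.{u} A) (i : L →ₗ[A] ModuleCat.of A (Fin n → A))
      (p : ModuleCat.of A (Fin n → A) →ₗ[A] N), ShortExact i p := by
  obtain ⟨n, p, hp⟩ := Module.Finite.exists_fin' A N
  exact ⟨n, _, _, p, shortExact_ker (M₂ := ModuleCat.of A (Fin n → A)) p hp⟩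

lemma extZero_succ_of_forall_inP [IsNoetherianRing A] {K : ModuleCat.{u} A}
    (hK : ∀ N, InP N → ExtZero N K 1) (i : ℕ) : ∀ N, InP N → ExtZero N K (i + 1) := by
  induction i with
  | zero => exact hK
  | succ i ih =>
    intro N hN
    have := hN.1
    obtain ⟨n, L, j, p, h⟩ := exists_shortExact_free N
    exact h.extZero_right_left (ih L (h.inP_left (InP.of_projective _) hN))
      (extZero_of_projective _ _ _)

/-- The pushout of a short exact sequence along a map out of its left term. -/
lemma ShortExact.exists_pushout (h : ShortExact f g) {X : ModuleCat.{u} A} (l : M₁ →ₗ[A] X) :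
    ∃ (V : ModuleCat.{u} A) (a : X →ₗ[A] V) (b : M₂ →ₗ[A] V) (p : V →ₗ[A] M₃),
      ShortExact a p ∧ a ∘ₗ l = b ∘ₗ f ∧ p ∘ₗ b = g ∧
      ∀ (Y : ModuleCat.{u} A) (s : X →ₗ[A] Y) (t : M₂ →ₗ[A] Y), s ∘ₗ l = t ∘ₗ f →
        ∃ c : V →ₗ[A] Y, c ∘ₗ a = s ∧ c ∘ₗ b = t := by
  let W : Submodule A (X × M₂) := LinearMap.range (l.prod (-f))
  have hW : ∀ x y, (x, y) ∈ W ↔ ∃ z, l z = x ∧ - f z = y := by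
    intro x y
    simp [W, LinearMap.mem_range]
  refine ⟨ModuleCat.of A ((X × M₂) ⧸ W), W.mkQ ∘ₗ LinearMap.inl A X M₂,
    W.mkQ ∘ₗ LinearMap.inr A X M₂, W.liftQ (g ∘ₗ LinearMap.snd A X M₂) ?_, ⟨?_, ?_, ?_⟩, ?_, ?_, ?_⟩
  · rintro ⟨x, y⟩ hxy
    obtain ⟨z, rfl, rfl⟩ := (hW x y).1 hxy
    simp [h.2.1.apply_apply_eq_zero]
  · rw [injective_iff_map_eq_zero]
    intro x hx
    have hx' : (x, (0 : M₂)) ∈ W := (Submodule.Quotient.mk_eq_zero W).1 hx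
    obtain ⟨z, rfl, hz⟩ := (hW _ _).1 hx'
    rw [neg_eq_zero, map_eq_zero_iff f h.1] at hz
    simp [hz]
  · intro v
    obtain ⟨⟨x, y⟩, rfl⟩ := W.mkQ_surjective v
    constructor
    · intro hv
      obtain ⟨z, rfl⟩ := (h.2.1 y).1 (by simpa using hv)
      refine ⟨x + l z, ?_⟩
      refine (Submodule.Quotient.eq W).2 ((hW _ _).2 ⟨z, ?_, ?_⟩) <;> simp
    · rintro ⟨x', hx'⟩
      rw [← hx']
      simp
  · intro m
    obtain ⟨y, rfl⟩ := h.2.2 m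
    exact ⟨W.mkQ (0, y), by simp⟩
  · ext z
    refine (Submodule.Quotient.eq W).2 ((hW _ _).2 ⟨z, ?_, ?_⟩) <;> simp
  · ext y
    simp
  · intro Y s t hst
    refine ⟨W.liftQ (s.coprod t) ?_, ?_, ?_⟩
    · rintro ⟨x, y⟩ hxy
      obtain ⟨z, rfl, rfl⟩ := (hW x y).1 hxy
      have := LinearMap.congr_fun hst z
      simp at this
      simp [this]
    · ext x; simp
    · ext x; simp

end FiniteProjectiveDimension

section Approximations

variable {A : Type u} [Ring A]

lemma IsRightApprox.surjective {X M : ModuleCat.{u} A} {f : X →ₗ[A] M}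
    (hf : IsRightApprox InP f) : Function.Surjective f := by
  intro m
  obtain ⟨h, hh⟩ := hf.2 (ModuleCat.of A A) (InP.of_projective _) (LinearMap.toSpanSingleton A M m)
  exact ⟨h (1 : A), by simpa using LinearMap.congr_fun hh (1 : A)⟩

lemma isSummand_range_of_isCompl {M : ModuleCat.{u} A} {e : M →ₗ[A] M} {N : Submodule A M}
    (h : IsCompl N (LinearMap.range e)) :
    IsSummand (ModuleCat.of A (LinearMap.range e)) M :=
  ⟨(LinearMap.range e).subtype, (LinearMap.range e).projectionOnto N h.symm, by
    ext x; simp⟩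

/-- Every finitely generated module has a minimal right approximation as soon as `𝒫` is
contravariantly finite. -/
lemma ContravariantlyFinite.exists_isMinimalRightApprox [IsNoetherianRing A] [IsArtinianRing A]
    (hcf : ContravariantlyFinite (InP (A := A))) (M : ModuleCat.{u} A) [Module.Finite A M] :
    ∃ (X : ModuleCat.{u} A) (f : X →ₗ[A] M), IsMinimalRightApprox InP f := by
  obtain ⟨X, f, hf⟩ := hcf M ‹_›
  have := hf.1.1
  let S : Set (Submodule A X) :=
    {N | IsRightApprox InP (XM := ModuleCat.of A N) (f ∘ₗ N.subtype)}
  have hS : S.Nonempty := by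
    refine ⟨⊤, hf.1.of_isSummand ⟨(⊤ : Submodule A X).subtype, Submodule.topEquiv.symm.toLinearMap,
      by ext; rfl⟩, fun Y hY g => ?_⟩
    obtain ⟨h, rfl⟩ := hf.2 Y hY g
    exact ⟨Submodule.topEquiv.symm.toLinearMap ∘ₗ h, by ext; rfl⟩
  obtain ⟨N, hN, hmin⟩ := WellFounded.has_min (wellFounded_lt (α := Submodule A X)) S hS
  refine ⟨ModuleCat.of A N, f ∘ₗ N.subtype, hN, fun (g : N →ₗ[A] N) hg => ?_⟩
  have hg : (f ∘ₗ N.subtype) ∘ₗ g = f ∘ₗ N.subtype := hg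
  obtain ⟨n, hn, hc⟩ := (LinearMap.eventually_isCompl_ker_pow_range_pow g).and
    (Filter.eventually_ge_atTop 1) |>.exists
  have hpow : ∀ k, (f ∘ₗ N.subtype) ∘ₗ (g ^ k) = f ∘ₗ N.subtype := by
    intro k
    induction k with
    | zero => rfl
    | succ k ih => rw [pow_succ, Module.End.mul_eq_comp, ← LinearMap.comp_assoc, ih, hg]
  let N' := (LinearMap.range (g ^ n)).map N.subtype
  let e : LinearMap.range (g ^ n) ≃ₗ[A] N' :=
    Submodule.equivMapOfInjective N.subtype Subtype.val_injective _
  have hN' : N' ∈ S := by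
    refine ⟨(hN.1.of_isSummand (isSummand_range_of_isCompl (M := ModuleCat.of A N) hn)).of_isSummand
      ⟨e.symm.toLinearMap, e.toLinearMap, by ext; simp⟩, fun Y hY φ => ?_⟩
    obtain ⟨h, rfl⟩ := hN.2 Y hY φ
    refine ⟨e.toLinearMap ∘ₗ (g ^ n).rangeRestrict ∘ₗ h, ?_⟩
    ext y
    exact LinearMap.congr_fun (hpow n) (h y)
  have hsurj : Function.Surjective g := by
    have hle : N ≤ N' := by
      by_contra hlt
      exact hmin N' hN' (lt_of_le_not_ge (Submodule.map_subtype_le _ _) hlt)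
    intro x
    obtain ⟨y, ⟨z, rfl⟩, hy⟩ := hle x.2
    refine ⟨(g ^ (n - 1)) z, ?_⟩
    apply Subtype.val_injective
    rw [← hy, ← Module.End.mul_apply, ← pow_succ', Nat.sub_add_cancel hc]
    rfl
  have : IsNoetherian A N := inferInstance
  exact IsNoetherian.bijective_of_surjective_endomorphism g hsurj

/-- **Wakamatsu's lemma** for `𝒫`: the kernel of a minimal right approximation lies in the
right `Ext`-orthogonal of `𝒫`. -/
lemma IsMinimalRightApprox.extZero_ker {X M : ModuleCat.{u} A} {f : X →ₗ[A] M}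
    (hf : IsMinimalRightApprox InP f) {N : ModuleCat.{u} A} (hN : InP N) :
    ExtZero N (ModuleCat.of A (LinearMap.ker f)) 1 := by
  have := hN.1
  obtain ⟨n, L, i, p, h⟩ := exists_shortExact_free N
  refine h.extZero_one_of_extend fun l => ?_
  obtain ⟨V, a, b, q, hV, hab, hqb, hc⟩ := h.exists_pushout ((LinearMap.ker f).subtype ∘ₗ l)
  obtain ⟨c, hca, hcb⟩ := hc M f 0 (by ext x; simp)
  obtain ⟨u, hu⟩ := hf.1.2 V (hV.inP_mid hf.1.1 hN) c
  let g : X →ₗ[A] X := u ∘ₗ a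
  have hfg : f ∘ₗ g = f := by rw [← LinearMap.comp_assoc, hu, hca]
  let e := LinearEquiv.ofBijective g (hf.2 g hfg)
  have hfe : ∀ x, f (e.symm x) = f x := by
    intro x
    conv_rhs => rw [← e.apply_symm_apply x]
    exact (LinearMap.congr_fun hfg _).symm
  refine ⟨(e.symm.toLinearMap ∘ₗ u ∘ₗ b).codRestrict (LinearMap.ker f) fun x => ?_, ?_⟩
  · rw [LinearMap.mem_ker]
    refine (hfe _).trans ?_
    have := LinearMap.congr_fun hu (b x)
    have h0 := LinearMap.congr_fun hcb x
    simp only [LinearMap.comp_apply] at this h0 ⊢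
    rw [this, h0]; rfl
  · ext x
    have := LinearMap.congr_fun hab x
    simp only [LinearMap.comp_apply] at this
    change e.symm (u (b (i x))) = (l x : X)
    rw [← this, LinearEquiv.symm_apply_eq]
    rfl

end Approximations

section BoundedProjectiveDimension

variable {A : Type u} [Ring A]

/-- A simple module over an artinian ring is a direct summand of `A ⧸ rad A`. -/
lemma IsSimpleModule.isSummand_quotient_jacobson [IsArtinianRing A] (S : ModuleCat.{u} A)
    [IsSimpleModule A S] : IsSummand S (ModuleCat.of A (A ⧸ Module.jacobson A A)) := by
  obtain ⟨m, hm, ⟨e⟩⟩ := isSimpleModule_iff_quot_maximal.1 ‹IsSimpleModule A S›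
  have hss : IsSemisimpleModule A (A ⧸ Module.jacobson A A) :=
    (IsArtinian.isSemisimpleModule_iff_jacobson A _).2 (Module.jacobson_quotient_jacobson A A)
  have hle : Module.jacobson A A ≤ m := sInf_le hm.out
  let q : (A ⧸ Module.jacobson A A) →ₗ[A] S := e.symm.toLinearMap ∘ₗ Submodule.factor hle
  have hq : Function.Surjective q := e.symm.surjective.comp (Submodule.factor_surjective hle)
  obtain ⟨s, hs⟩ := IsSemisimpleModule.lifting_property q hq LinearMap.id
  exact ⟨s, q, hs⟩

lemma IsMinimalRightApprox.isSummand {X Y M N : ModuleCat.{u} A} {f : X →ₗ[A] M}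
    {g : Y →ₗ[A] N} (hf : IsMinimalRightApprox InP f) (hg : IsRightApprox InP g)
    (h : IsSummand M N) : IsSummand X Y := by
  obtain ⟨s, r, hrs⟩ := h
  obtain ⟨a, ha⟩ := hg.2 X hf.1.1 (s ∘ₗ f)
  obtain ⟨b, hb⟩ := hf.1.2 Y hg.1 (r ∘ₗ g)
  have hba : f ∘ₗ (b ∘ₗ a) = f := by
    rw [← LinearMap.comp_assoc, hb, LinearMap.comp_assoc, ha, ← LinearMap.comp_assoc, hrs,
      LinearMap.id_comp]
  let e := LinearEquiv.ofBijective _ (hf.2 _ hba)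
  refine ⟨a, e.symm.toLinearMap ∘ₗ b, ?_⟩
  ext x
  exact e.symm_apply_apply x

/-- Special right approximations extend along a short exact sequence of modules, the middle one
being built as an extension of the outer ones. -/
lemma ShortExact.exists_approx_extension [IsNoetherianRing A]
    {M' M S X' Y : ModuleCat.{u} A} {j : M' →ₗ[A] M} {r : M →ₗ[A] S} (hM : ShortExact j r)
    {f' : X' →ₗ[A] M'} (hf' : Function.Surjective f')
    (hk' : ∀ N, InP N → ExtZero N (ModuleCat.of A (LinearMap.ker f')) 1)
    {f : Y →ₗ[A] S} (hf : Function.Surjective f) (hY : InP Y)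
    (hk : ∀ N, InP N → ExtZero N (ModuleCat.of A (LinearMap.ker f)) 1) :
    ∃ (V : ModuleCat.{u} A) (a : X' →ₗ[A] V) (p : V →ₗ[A] Y) (c : V →ₗ[A] M),
      ShortExact a p ∧ Function.Surjective c ∧
      ∀ N, InP N → ExtZero N (ModuleCat.of A (LinearMap.ker c)) 1 := by
  have := hY.1
  obtain ⟨n, L, i, π, h⟩ := exists_shortExact_free Y
  have hL : InP L := h.inP_left (InP.of_projective _) hY
  obtain ⟨q, hq⟩ := Module.projective_lifting_property r (f ∘ₗ π) hM.2.2
  have hq' : ∀ y, r (q y) = f (π y) := LinearMap.congr_fun hq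
  have hqi : ∀ x, q (i x) ∈ LinearMap.range j := fun x => by
    have : r (q (i x)) = 0 := by rw [hq', h.2.1.apply_apply_eq_zero, map_zero]
    exact (hM.2.1 _).1 this
  obtain ⟨l, hl⟩ := (shortExact_ker f' hf').exists_lift (hk' L hL)
    ((LinearEquiv.ofInjective j hM.1).symm.toLinearMap ∘ₗ (q ∘ₗ i).codRestrict _ hqi)
  have hl' : ∀ x, j (f' (l x)) = q (i x) := fun x => by
    rw [show f' (l x) = _ from LinearMap.congr_fun hl x]
    exact congrArg Subtype.val ((LinearEquiv.ofInjective j hM.1).apply_symm_apply ⟨_, hqi x⟩)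
  obtain ⟨V, a, b, p, hV, hab, hpb, hc⟩ := h.exists_pushout l
  obtain ⟨c, hca, hcb⟩ := hc M (j ∘ₗ f') q (by ext x; exact hl' x)
  have hca' : ∀ x, c (a x) = j (f' x) := LinearMap.congr_fun hca
  have hcb' : ∀ x, c (b x) = q x := LinearMap.congr_fun hcb
  have hrc : ∀ v, r (c v) = f (p v) := fun v => by
    obtain ⟨y, hy⟩ := h.2.2 (p v)
    have hpb' : p (b y) = p v := (LinearMap.congr_fun hpb y).trans hy
    obtain ⟨x, hx⟩ := (hV.2.1 (v - b y)).1 (by rw [map_sub, hpb', sub_self])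
    obtain rfl : v = a x + b y := by rw [hx, sub_add_cancel]
    rw [map_add, map_add, hca', hcb', hM.2.1.apply_apply_eq_zero, zero_add, hq', map_add,
      hV.2.1.apply_apply_eq_zero, zero_add, show p (b y) = π y from LinearMap.congr_fun hpb y]
  have key : ∀ (m : M) (v : V), f (p v) = r m → ∃ x, c (v + a x) = m := fun m v hv => by
    obtain ⟨m', hm'⟩ := (hM.2.1 (m - c v)).1 (by rw [map_sub, hrc, hv, sub_self])
    obtain ⟨x, rfl⟩ := hf' m'
    exact ⟨x, by rw [map_add, hca', hm', add_sub_cancel]⟩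
  refine ⟨V, a, p, c, hV, fun m => ?_, fun N hN => ?_⟩
  · obtain ⟨y, hy⟩ := hf (r m)
    obtain ⟨v, rfl⟩ := hV.2.2 y
    obtain ⟨x, hx⟩ := key m v hy
    exact ⟨_, hx⟩
  · let a₀ : LinearMap.ker f' →ₗ[A] LinearMap.ker c := a.restrict fun x hx => by
      rw [LinearMap.mem_ker] at hx ⊢
      rw [hca', hx, map_zero]
    let p₀ : LinearMap.ker c →ₗ[A] LinearMap.ker f := p.restrict fun v hv => by
      rw [LinearMap.mem_ker] at hv ⊢
      rw [← hrc, hv, map_zero]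
    have hK : ShortExact (M₁ := ModuleCat.of A (LinearMap.ker f'))
        (M₂ := ModuleCat.of A (LinearMap.ker c)) (M₃ := ModuleCat.of A (LinearMap.ker f))
        a₀ p₀ := by
      refine ⟨fun x y hxy => Subtype.ext (hV.1 (congrArg Subtype.val hxy)), ?_, ?_⟩
      · rintro ⟨v, hv⟩
        constructor
        · intro h0
          obtain ⟨x, rfl⟩ := (hV.2.1 v).1 (congrArg Subtype.val h0)
          refine ⟨⟨x, ?_⟩, rfl⟩
          rw [LinearMap.mem_ker, hca'] at hv
          exact hM.1 (hv.trans (map_zero j).symm)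
        · rintro ⟨x, hx⟩
          rw [← hx]
          exact Subtype.ext (hV.2.1.apply_apply_eq_zero x.1)
      · rintro ⟨y, hy⟩
        obtain ⟨v, rfl⟩ := hV.2.2 y
        obtain ⟨x, hx⟩ := key 0 v (by rw [map_zero]; exact hy)
        refine ⟨⟨_, hx⟩, Subtype.ext ?_⟩
        change p (v + a x) = p v
        rw [map_add, hV.2.1.apply_apply_eq_zero, add_zero]
    exact hK.extZero_mid_right (hk' N hN) (hk N hN)

/-- If `𝒫` is contravariantly finite, projective dimensions in `𝒫` are bounded. -/
lemma ContravariantlyFinite.exists_forall_hasProjectiveDimensionLT [IsNoetherianRing A]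
    [IsArtinianRing A] (hcf : ContravariantlyFinite (InP (A := A))) :
    ∃ d, ∀ N : ModuleCat.{u} A, InP N → HasProjectiveDimensionLT N d := by
  obtain ⟨Y, g, hg⟩ := hcf (ModuleCat.of A (A ⧸ Module.jacobson A A)) inferInstance
  obtain ⟨-, d, hd⟩ := (inP_iff Y).1 hg.1
  have key : ∀ (M : Type u) [AddCommGroup M] [Module A M], IsFiniteLength A M →
      ∃ (X : ModuleCat.{u} A) (f : X →ₗ[A] ModuleCat.of A M), Function.Surjective f ∧
        HasProjectiveDimensionLT X d ∧
        ∀ N, InP N → ExtZero N (ModuleCat.of A (LinearMap.ker f)) 1 := by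
    intro M _ _ hM
    induction hM with
    | @of_subsingleton M _ _ _ =>
      have hz := ModuleCat.isZero_of_subsingleton (ModuleCat.of A M)
      have := hz.hasProjectiveDimensionLT_zero
      refine ⟨ModuleCat.of A M, LinearMap.id, Function.surjective_id,
        hasProjectiveDimensionLT_of_ge _ 0 d d.zero_le, fun N _ => ?_⟩
      have := (ModuleCat.isZero_of_subsingleton
        (ModuleCat.of A (LinearMap.ker (LinearMap.id : M →ₗ[A] M)))).injective
      exact subsingleton_of_forall_eq 0 fun x => Abelian.Ext.eq_zero_of_injective x
    | @of_simple_quotient M _ _ M' _ _ ih =>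
      obtain ⟨X', f', hf', hX', hk'⟩ := ih
      obtain ⟨Z, f, hf⟩ := hcf.exists_isMinimalRightApprox (ModuleCat.of A (M ⧸ M'))
      have hs : ShortExact (M₁ := ModuleCat.of A M') (M₂ := ModuleCat.of A M)
          (M₃ := ModuleCat.of A (M ⧸ M')) M'.subtype M'.mkQ :=
        ⟨Subtype.val_injective, LinearMap.exact_subtype_mkQ M', M'.mkQ_surjective⟩
      have hZ : HasProjectiveDimensionLT Z d :=
        (hf.isSummand hg (IsSimpleModule.isSummand_quotient_jacobson _)).hasProjectiveDimensionLT hd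
      obtain ⟨V, a, p, c, hV, hc, hk⟩ := hs.exists_approx_extension hf' hk' hf.1.surjective hf.1.1
        fun N hN => hf.extZero_ker hN
      exact ⟨V, c, hc, hV.shortExact_shortComplex.hasProjectiveDimensionLT_X₂ d hX' hZ, hk⟩
  refine ⟨d, fun N hN => ?_⟩
  have := hN.1
  obtain ⟨X, f, hf, hX, hk⟩ := key N (isFiniteLength_iff_isNoetherian_isArtinian.2
    ⟨inferInstance, inferInstance⟩)
  obtain ⟨s, hs⟩ := (shortExact_ker (M₃ := N) f hf).exists_lift (hk N hN) LinearMap.id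
  exact IsSummand.hasProjectiveDimensionLT ⟨s, f, hs⟩ hX

end BoundedProjectiveDimension

section RelativeInjectiveCogenerator

variable {A : Type u} [Ring A]

lemma forall_pi_of_extension_closed {X : ModuleCat.{u} A → Prop}
    (h0 : ∀ M : ModuleCat.{u} A, Subsingleton M → X M)
    (hX : ∀ (M₁ M₂ M₃ : ModuleCat.{u} A) (f : M₁ →ₗ[A] M₂) (g : M₂ →ₗ[A] M₃),
      ShortExact f g → X M₁ → X M₃ → X M₂) {n : ℕ} (F : Fin n → ModuleCat.{u} A)
    (hF : ∀ i, X (F i)) : X (ModuleCat.of A (∀ i, F i)) := by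
  induction n with
  | zero => exact h0 _ (inferInstanceAs (Subsingleton (∀ i : Fin 0, F i)))
  | succ n ih =>
    refine hX (F 0) _ (ModuleCat.of A (∀ i : Fin n, F i.succ)) (LinearMap.single A (fun i => F i) 0)
      (LinearMap.pi fun i => LinearMap.proj i.succ) ⟨?_, ?_, ?_⟩ (hF 0) (ih _ fun i => hF _)
    · exact Pi.single_injective (M := fun i => F i) 0
    · intro y
      constructor
      · intro hy
        refine ⟨y 0, funext fun i => ?_⟩
        refine Fin.cases ?_ (fun i => ?_) i
        · exact Pi.single_eq_same (M := fun i => F i) 0 (y 0)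
        · exact (Pi.single_eq_of_ne (M := fun i => F i) (Fin.succ_ne_zero i) (y 0)).trans
            (congrFun hy i).symm
      · rintro ⟨x, rfl⟩
        exact funext fun i => Pi.single_eq_of_ne (M := fun i => F i) (Fin.succ_ne_zero i) x
    · intro y
      exact ⟨Fin.cons 0 y, funext fun i => Fin.cons_succ (α := fun i => F i) 0 y i⟩

lemma IsSummand.of_linearEquiv {M N : ModuleCat.{u} A} (e : M ≃ₗ[A] N) : IsSummand M N :=
  ⟨e.toLinearMap, e.symm.toLinearMap, by ext x; exact e.symm_apply_apply x⟩

lemma IsSummand.trans {M N L : ModuleCat.{u} A} (h : IsSummand M N) (h' : IsSummand N L) :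
    IsSummand M L := by
  obtain ⟨s, r, h⟩ := h
  obtain ⟨s', r', h'⟩ := h'
  refine ⟨s' ∘ₗ s, r ∘ₗ r', LinearMap.ext fun x => ?_⟩
  exact (congrArg r (LinearMap.congr_fun h' (s x))).trans (LinearMap.congr_fun h x)

lemma IsSummand.pi {κ : Type} {M N : κ → ModuleCat.{u} A} (h : ∀ k, IsSummand (M k) (N k)) :
    IsSummand (ModuleCat.of A (∀ k, M k)) (ModuleCat.of A (∀ k, N k)) := by
  choose s r h using h
  exact ⟨LinearMap.pi fun k => s k ∘ₗ LinearMap.proj k,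
    LinearMap.pi fun k => r k ∘ₗ LinearMap.proj k,
    LinearMap.ext fun x => funext fun k => LinearMap.congr_fun (h k) (x k)⟩

lemma inAddOf_eq_iff {T M : ModuleCat.{u} A} : InAddOf (fun X => X = T) M ↔
    ∃ k : ℕ, IsSummand M (ModuleCat.of A (Fin k → T)) := by
  constructor
  · rintro ⟨k, F, hF, h⟩
    obtain rfl : F = fun _ => T := funext hF
    exact ⟨k, h.trans (.of_linearEquiv (DirectSum.linearEquivFunOnFintype A (Fin k) fun _ => T))⟩
  · rintro ⟨k, h⟩
    exact ⟨k, fun _ => T, fun _ => rfl, h.trans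
      (.of_linearEquiv (DirectSum.linearEquivFunOnFintype A (Fin k) fun _ => T).symm)⟩

lemma ExtInjInP.of_isSummand {M S : ModuleCat.{u} A} (hS : ExtInjInP S) (h : IsSummand M S) :
    ExtInjInP M := by
  rw [extInjInP_iff] at hS ⊢
  exact ⟨hS.1.of_isSummand h, fun N hN => h.extZero (hS.2 N hN)⟩

lemma extZero_of_injective (N I : ModuleCat.{u} A) [Injective I] (i : ℕ) :
    ExtZero N I (i + 1) :=
  subsingleton_of_forall_eq 0 fun x => Abelian.Ext.eq_zero_of_injective x

lemma extInjInP_of_subsingleton (M : ModuleCat.{u} A) (h : Subsingleton M) : ExtInjInP M := by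
  have := (ModuleCat.isZero_of_subsingleton M).injective
  have hP : Module.Projective A M := ⟨0, fun _ => Subsingleton.elim _ _⟩
  exact (extInjInP_iff M).2 ⟨@InP.of_projective _ _ M _ hP, fun N _ => extZero_of_injective N M 0⟩

lemma ExtInjInP.pi {n : ℕ} (F : Fin n → ModuleCat.{u} A) (hF : ∀ i, ExtInjInP (F i)) :
    ExtInjInP (ModuleCat.of A (∀ i, F i)) := by
  refine forall_pi_of_extension_closed extInjInP_of_subsingleton ?_ F hF
  intro M₁ M₂ M₃ f g h h₁ h₃
  rw [extInjInP_iff] at h₁ h₃ ⊢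
  exact ⟨h.inP_mid h₁.1 h₃.1, fun N hN => h.extZero_mid_right (h₁.2 N hN) (h₃.2 N hN)⟩

lemma ExtInjInP.directSum {ι : Type u} [Finite ι] (F : ι → ModuleCat.{u} A)
    (hF : ∀ i, ExtInjInP (F i)) : ExtInjInP (ModuleCat.of A (DirectSum ι fun i => F i)) := by
  obtain ⟨n, ⟨σ⟩⟩ := Finite.exists_equiv_fin ι
  have := Fintype.ofFinite ι
  classical
  exact (ExtInjInP.pi (fun j => F (σ.symm j)) fun j => hF _).of_isSummand
    (.of_linearEquiv (DirectSum.linearEquivFunOnFintype A ι (fun i => F i) ≪≫ₗ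
      LinearEquiv.piCongrLeft' A (fun i => F i) σ))

/-- If `mod A` has an injective cogenerator, then `𝒫` has an Ext-injective one as soon as it is
contravariantly finite. -/
lemma ContravariantlyFinite.exists_relative_cogenerator [IsNoetherianRing A] [IsArtinianRing A]
    (hcf : ContravariantlyFinite (InP (A := A))) (I : ModuleCat.{u} A) [Module.Finite A I]
    [Injective I]
    (hI : ∀ M : ModuleCat.{u} A, Module.Finite A M →
      ∃ (n : ℕ) (f : M →ₗ[A] (Fin n → I)), Function.Injective f) :
    ∃ X : ModuleCat.{u} A, ExtInjInP X ∧ ∀ M : ModuleCat.{u} A, InP M →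
      ∃ (n : ℕ) (f : M →ₗ[A] (Fin n → X)), Function.Injective f := by
  obtain ⟨X, p, hp⟩ := hcf.exists_isMinimalRightApprox I
  refine ⟨X, (extInjInP_iff X).2 ⟨hp.1.1, fun N hN => ?_⟩, fun M hM => ?_⟩
  · exact (shortExact_ker p hp.1.surjective).extZero_mid_right (hp.extZero_ker hN)
      (extZero_of_injective N I 0)
  · obtain ⟨n, f, hf⟩ := hI M hM.1
    choose g hg using fun i => hp.1.2 M hM (LinearMap.proj i ∘ₗ f)
    refine ⟨n, LinearMap.pi g, fun x y hxy => hf (funext fun i => ?_)⟩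
    have hx := LinearMap.congr_fun (hg i) x
    have hy := LinearMap.congr_fun (hg i) y
    exact hx.symm.trans ((congrArg p (congrFun hxy i)).trans hy)

lemma ExtInjInP.exists_isSummand_pi {X : ModuleCat.{u} A} (hX : ExtInjInP X)
    (hcog : ∀ M : ModuleCat.{u} A, InP M →
      ∃ (n : ℕ) (f : M →ₗ[A] (Fin n → X)), Function.Injective f)
    {E : ModuleCat.{u} A} (hE : ExtInjInP E) :
    ∃ n : ℕ, IsSummand E (ModuleCat.of A (Fin n → X)) := by
  obtain ⟨n, f, hf⟩ := hcog E hE.1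
  have h := shortExact_quotient (M₂ := ModuleCat.of A (Fin n → X)) f hf
  have hC := h.inP_right hE.1 (ExtInjInP.pi _ fun _ => hX).1
  obtain ⟨r, hr⟩ := h.exists_extend (((extInjInP_iff E).1 hE).2 _ hC) LinearMap.id
  exact ⟨n, f, r, hr⟩

lemma HasAddCoresolution.of_inAddOf {T M : ModuleCat.{u} A}
    (h : InAddOf (fun X => X = T) M) : HasAddCoresolution T M := by
  refine ⟨fun n => Nat.casesOn n M fun _ => ModuleCat.of A PUnit, fun _ => 0, LinearMap.id,
    Function.injective_id, ?_, ?_, ?_, 1, ?_⟩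
  · exact fun y => ⟨fun _ => ⟨y, rfl⟩, fun _ => rfl⟩
  · exact fun i y => ⟨fun _ => ⟨0, Subsingleton.elim (α := PUnit) _ _⟩, fun _ => rfl⟩
  · rintro (_ | i)
    · exact h
    · exact inAddOf_eq_iff.2 ⟨0, 0, 0, LinearMap.ext fun _ => Subsingleton.elim (α := PUnit) _ _⟩
  · rintro (_ | i) hi
    · omega
    · exact inferInstanceAs (Subsingleton PUnit)

lemma HasAddCoresolution.of_shortExact {T M X M' : ModuleCat.{u} A} {f : M →ₗ[A] X}
    {g : X →ₗ[A] M'} (h : ShortExact f g) (hX : InAddOf (fun X => X = T) X)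
    (hM' : HasAddCoresolution T M') : HasAddCoresolution T M := by
  obtain ⟨C, d, a, ha, h0, hd, hC, m, hm⟩ := hM'
  refine ⟨fun n => Nat.casesOn n X C,
    fun n => Nat.rec (motive := fun n => (Nat.casesOn n X C : ModuleCat.{u} A) →ₗ[A] C n)
      (a ∘ₗ g) (fun n _ => d n) n, f, h.1, ?_, ?_, ?_, m + 1, ?_⟩
  · intro y
    exact (map_eq_zero_iff a ha).trans (h.2.1 y)
  · rintro (_ | i)
    · intro y
      refine (h0 y).trans ⟨?_, ?_⟩
      · rintro ⟨x, rfl⟩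
        obtain ⟨z, rfl⟩ := h.2.2 x
        exact ⟨z, rfl⟩
      · rintro ⟨z, rfl⟩
        exact ⟨g z, rfl⟩
    · exact hd i
  · rintro (_ | i)
    exacts [hX, hC i]
  · rintro (_ | i) hi
    · omega
    · exact hm i (by omega)

lemma InP.hasAddCoresolution [IsNoetherianRing A] {T X : ModuleCat.{u} A} (hX : ExtInjInP X)
    (hcog : ∀ M : ModuleCat.{u} A, InP M →
      ∃ (n : ℕ) (f : M →ₗ[A] (Fin n → X)), Function.Injective f)
    (hT : ∀ E : ModuleCat.{u} A, ExtInjInP E → InAddOf (fun X => X = T) E) (d : ℕ) :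
    ∀ M : ModuleCat.{u} A, InP M →
      (∀ N, InP N → ∀ i, d ≤ i → ExtZero N M (i + 1)) → HasAddCoresolution T M := by
  induction d with
  | zero =>
    intro M hM h
    exact .of_inAddOf (hT M ((extInjInP_iff M).2 ⟨hM, fun N hN => h N hN 0 le_rfl⟩))
  | succ d ih =>
    intro M hM h
    obtain ⟨n, f, hf⟩ := hcog M hM
    have hXn : ExtInjInP (ModuleCat.of A (Fin n → X)) := ExtInjInP.pi _ fun _ => hX
    have hs := shortExact_quotient (M₂ := ModuleCat.of A (Fin n → X)) f hf
    refine .of_shortExact hs (hT _ hXn) (ih _ (hs.inP_right hM hXn.1) fun N hN i hi => ?_)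
    exact hs.extZero_right_right (extZero_succ_of_forall_inP ((extInjInP_iff _).1 hXn).2 i N hN)
      (h N hN (i + 1) (by omega))

end RelativeInjectiveCogenerator

section IndecomposableSummands

variable {A : Type u} [Ring A]

lemma Indec.isLocalRing_end {M : ModuleCat.{u} A} (hM : Indec M) [IsNoetherian A M]
    [IsArtinian A M] : IsLocalRing (Module.End A M) := by
  have := not_subsingleton_iff_nontrivial.1 hM.1
  have hnil : ∀ φ : Module.End A M, IsUnit φ ∨ IsNilpotent φ := by
    intro φ
    obtain ⟨n, hn, hn0⟩ := (φ.eventually_isCompl_ker_pow_range_pow.and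
      (Filter.eventually_gt_atTop 0)).exists
    set p := Submodule.projection _ _ hn
    have hp : ∀ x, p x = 0 ↔ x ∈ LinearMap.range (φ ^ n) := fun x => by
      rw [← LinearMap.mem_ker, Submodule.ker_projection]
    have hp' : ∀ x, p x ∈ LinearMap.ker (φ ^ n) := fun x =>
      Submodule.projection_apply_mem hn x
    rcases hM.2 p (Submodule.isIdempotentElem_projection hn).eq with h | h
    · left
      have hr : LinearMap.range (φ ^ n) = ⊤ := by
        rw [eq_top_iff]
        exact fun x _ => (hp x).1 (by rw [h]; rfl)
      have hu : IsUnit (φ ^ n) := by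
        rw [Module.End.isUnit_iff]
        exact IsNoetherian.bijective_of_surjective_endomorphism _ (LinearMap.range_eq_top.1 hr)
      exact (isUnit_pow_iff hn0.ne').1 hu
    · right
      refine ⟨n, LinearMap.ext fun x => ?_⟩
      have := hp' x
      rwa [h] at this
  refine ⟨fun {a b} hab => ?_⟩
  refine (hnil a).imp_right fun ha => ?_
  rw [← eq_sub_iff_add_eq'] at hab
  exact hab ▸ ha.isUnit_one_sub

lemma IsSummand.exists_of_sum_eq_id {F M : ModuleCat.{u} A} (h : IsSummand F M)
    [IsLocalRing (Module.End A F)] {κ : Type} [Fintype κ] {N : κ → ModuleCat.{u} A}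
    (p : ∀ k, M →ₗ[A] N k) (j : ∀ k, N k →ₗ[A] M)
    (hpj : ∑ k, j k ∘ₗ p k = LinearMap.id) : ∃ k, IsSummand F (N k) := by
  obtain ⟨s, r, hrs⟩ := h
  have hsum : ∑ k, (r ∘ₗ j k ∘ₗ p k ∘ₗ s : Module.End A F) = 1 := by
    refine LinearMap.ext fun x => ?_
    have := congrArg r (LinearMap.congr_fun hpj (s x))
    rw [LinearMap.sum_apply, map_sum] at this
    rw [LinearMap.sum_apply]
    exact this.trans (LinearMap.congr_fun hrs x)
  obtain ⟨k, -, hk⟩ := IsLocalRing.exists_of_isUnit_sum (hsum ▸ isUnit_one)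
  obtain ⟨v, hv⟩ := hk.exists_left_inv
  exact ⟨k, p k ∘ₗ s, v ∘ₗ r ∘ₗ j k, hv⟩

lemma IsSummand.of_isSummand_pi_const {F M : ModuleCat.{u} A} [IsLocalRing (Module.End A F)]
    {n : ℕ} (h : IsSummand F (ModuleCat.of A (Fin n → M))) : IsSummand F M := by
  obtain ⟨-, hk⟩ := h.exists_of_sum_eq_id (N := fun _ => M) (fun k => LinearMap.proj k)
    (fun k => LinearMap.single A (fun _ => M) k)
    (by
      refine LinearMap.ext fun x => ?_
      rw [LinearMap.sum_apply]
      exact Finset.univ_sum_single x)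
  exact hk

lemma IsSummand.nonempty_linearEquiv {F M : ModuleCat.{u} A} (h : IsSummand F M)
    (hF : ¬ Subsingleton F) (hM : Indec M) : Nonempty (F ≃ₗ[A] M) := by
  obtain ⟨s, r, hrs⟩ := h
  have hrs' : ∀ x, r (s x) = x := LinearMap.congr_fun hrs
  rcases hM.2 (s ∘ₗ r) (LinearMap.ext fun x => congrArg s (hrs' (r x))) with h | h
  · refine (hF ⟨fun x y => ?_⟩).elim
    have hz : ∀ x : F, x = 0 := fun x => by
      have := congrArg r (LinearMap.congr_fun h (s x))
      simpa [hrs'] using this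
    rw [hz x, hz y]
  · exact ⟨.ofLinearMap s r h hrs⟩

/-- Every artinian module is a finite direct sum of indecomposable modules, phrased as an
induction principle. -/
theorem induction_on_indecomposables {motive : ModuleCat.{u} A → Prop}
    (zero : ∀ M : ModuleCat.{u} A, Subsingleton M → motive M)
    (indec : ∀ M : ModuleCat.{u} A, Indec M → motive M)
    (sum : ∀ (M M₁ M₂ : ModuleCat.{u} A) (j₁ : M₁ →ₗ[A] M) (p₁ : M →ₗ[A] M₁)
      (j₂ : M₂ →ₗ[A] M) (p₂ : M →ₗ[A] M₂), p₁ ∘ₗ j₁ = LinearMap.id → p₂ ∘ₗ j₂ = LinearMap.id →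
      j₁ ∘ₗ p₁ + j₂ ∘ₗ p₂ = LinearMap.id → motive M₁ → motive M₂ → motive M)
    (M : ModuleCat.{u} A) [IsArtinian A M] : motive M := by
  suffices ∀ (N : Submodule A M) (L : ModuleCat.{u} A) (f : L →ₗ[A] M), Function.Injective f →
      LinearMap.range f = N → motive L from
    this ⊤ M LinearMap.id Function.injective_id LinearMap.range_id
  intro N
  induction N using WellFoundedLT.induction with
  | ind N ih =>
  rintro L f hf rfl
  by_cases hL : Subsingleton L
  · exact zero L hL
  by_cases hi : Indec L
  · exact indec L hi
  simp only [Indec, hL, not_false_eq_true, true_and, not_forall, not_or] at hi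
  obtain ⟨e, he, he0, he1⟩ := hi
  have key : ∀ e : L →ₗ[A] L, e ∘ₗ e = e → e ≠ LinearMap.id →
      motive (ModuleCat.of A (LinearMap.range e)) ∧
        e.rangeRestrict ∘ₗ (LinearMap.range e).subtype = LinearMap.id := by
    intro e he he1
    have hee : ∀ x, e (e x) = e x := LinearMap.congr_fun he
    constructor
    · refine ih _ ?_ _ (f ∘ₗ (LinearMap.range e).subtype) (hf.comp Subtype.val_injective) rfl
      rw [LinearMap.range_comp, Submodule.range_subtype, LinearMap.range_eq_map f]
      refine Submodule.map_strictMono_of_injective hf (lt_top_iff_ne_top.2 fun h => he1 ?_)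
      refine LinearMap.ext fun x => ?_
      obtain ⟨y, rfl⟩ := LinearMap.range_eq_top.1 h x
      exact hee y
    · refine LinearMap.ext ?_
      rintro ⟨_, y, rfl⟩
      exact Subtype.ext (hee y)
  have he' : (LinearMap.id - e) ∘ₗ (LinearMap.id - e) = LinearMap.id - e := by
    have hee : ∀ x, e (e x) = e x := LinearMap.congr_fun he
    ext x
    simp [hee]
  obtain ⟨h₁, h₁'⟩ := key e he he1
  obtain ⟨h₂, h₂'⟩ := key _ he' fun h => he0 (by simpa using h)
  refine sum L _ _ (LinearMap.range e).subtype e.rangeRestrict (LinearMap.range _).subtype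
    (LinearMap.id - e).rangeRestrict h₁' h₂' ?_ h₁ h₂
  refine LinearMap.ext fun x => ?_
  change e x + (x - e x) = x
  abel

lemma finite_setOf_isSummand {ι : Type u} (F : ι → ModuleCat.{u} A) (hF : ∀ i, Indec (F i))
    (hloc : ∀ i, IsLocalRing (Module.End A (F i)))
    (hinj : ∀ i j, Nonempty (F i ≃ₗ[A] F j) → i = j) (M : ModuleCat.{u} A) [IsArtinian A M] :
    {i | IsSummand (F i) M}.Finite := by
  refine induction_on_indecomposables (motive := fun M => {i | IsSummand (F i) M}.Finite)
    ?_ ?_ ?_ M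
  · intro M hM
    convert Set.finite_empty
    refine Set.eq_empty_iff_forall_notMem.2 ?_
    rintro i ⟨s, r, h⟩
    refine (hF i).1 (Function.Injective.subsingleton (f := s) fun x y hxy => ?_)
    exact (LinearMap.congr_fun h x).symm.trans ((congrArg r hxy).trans (LinearMap.congr_fun h y))
  · intro M hM
    refine Set.Subsingleton.finite fun i hi j hj => hinj i j ?_
    obtain ⟨e⟩ := hi.nonempty_linearEquiv (hF i).1 hM
    obtain ⟨e'⟩ := hj.nonempty_linearEquiv (hF j).1 hM
    exact ⟨e.trans e'.symm⟩
  · intro M M₁ M₂ j₁ p₁ j₂ p₂ _ _ h h₁ h₂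
    refine (h₁.union h₂).subset fun i hi => ?_
    have := hloc i
    obtain ⟨k, hk⟩ := hi.exists_of_sum_eq_id (κ := Bool) (N := fun k => cond k M₁ M₂)
      (fun k => match k with | true => p₁ | false => p₂)
      (fun k => match k with | true => j₁ | false => j₂)
      (by rw [Fintype.sum_bool]; exact h)
    rcases k with _ | _
    exacts [Or.inr hk, Or.inl hk]

lemma ExtInjInP.inAddOf [IsArtinianRing A] {T : ModuleCat.{u} A}
    (hT : ∀ M : ModuleCat.{u} A, Indec M → ExtInjInP M → IsSummand M T)
    {M : ModuleCat.{u} A} (hM : ExtInjInP M) : InAddOf (fun X => X = T) M := by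
  have := hM.1.1
  suffices ∀ M : ModuleCat.{u} A, IsArtinian A M → ExtInjInP M →
      ∃ (κ : Type) (_ : Finite κ), IsSummand M (ModuleCat.of A (κ → T)) by
    obtain ⟨κ, _, h⟩ := this M inferInstance hM
    obtain ⟨n, ⟨σ⟩⟩ := Finite.exists_equiv_fin κ
    exact inAddOf_eq_iff.2 ⟨n, h.trans (.of_linearEquiv (LinearEquiv.funCongrLeft A T σ.symm))⟩
  intro M _
  refine induction_on_indecomposables (motive := fun M => ExtInjInP M →
    ∃ (κ : Type) (_ : Finite κ), IsSummand M (ModuleCat.of A (κ → T))) ?_ ?_ ?_ M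
  · exact fun M hM _ => ⟨Empty, inferInstance, 0, 0, LinearMap.ext fun _ => Subsingleton.elim _ _⟩
  · exact fun M hi hM => ⟨Unit, inferInstance, (hT M hi hM).trans
      (.of_linearEquiv (LinearEquiv.funUnique Unit A T).symm)⟩
  · intro M M₁ M₂ j₁ p₁ j₂ p₂ h₁ h₂ h ih₁ ih₂ hM
    obtain ⟨κ₁, _, s₁, r₁, hs₁⟩ := ih₁ (hM.of_isSummand ⟨j₁, p₁, h₁⟩)
    obtain ⟨κ₂, _, s₂, r₂, hs₂⟩ := ih₂ (hM.of_isSummand ⟨j₂, p₂, h₂⟩)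
    refine ⟨κ₁ ⊕ κ₂, inferInstance,
      LinearMap.pi (Sum.rec (fun k => LinearMap.proj k ∘ₗ s₁ ∘ₗ p₁)
        fun k => LinearMap.proj k ∘ₗ s₂ ∘ₗ p₂),
      j₁ ∘ₗ r₁ ∘ₗ LinearMap.funLeft A T Sum.inl + j₂ ∘ₗ r₂ ∘ₗ LinearMap.funLeft A T Sum.inr,
      LinearMap.ext fun x => ?_⟩
    have e₁ := congrArg j₁ (LinearMap.congr_fun hs₁ (p₁ x))
    have e₂ := congrArg j₂ (LinearMap.congr_fun hs₂ (p₂ x))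
    exact (congrArg₂ (· + ·) e₁ e₂).trans (LinearMap.congr_fun h x)

end IndecomposableSummands

section InjectiveCogenerator

variable {R : Type u} [CommRing R]

/-- `E` is an essential extension of `S` inside an ambient module. -/
def Submodule.EssentialIn {Q : Type u} [AddCommGroup Q] [Module R Q] (S E : Submodule R Q) :
    Prop :=
  S ≤ E ∧ ∀ x ∈ E, x ≠ 0 → ∃ r : R, r • x ∈ S ∧ r • x ≠ 0

variable {Q : Type u} [AddCommGroup Q] [Module R Q] {S : Submodule R Q}

lemma Submodule.EssentialIn.exists_maximal (S : Submodule R Q) :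
    ∃ E, Maximal S.EssentialIn E := by
  obtain ⟨E, -, hE⟩ := zorn_le_nonempty₀ {E | S.EssentialIn E} (fun c hc hchain E hE => by
    refine ⟨sSup c, ⟨(hc hE).1.trans (le_sSup hE), fun x hx hx0 => ?_⟩, fun z hz => le_sSup hz⟩
    obtain ⟨E', hE', hx'⟩ := (Submodule.mem_sSup_of_directed ⟨E, hE⟩ hchain.directedOn).1 hx
    exact (hc hE').2 x hx' hx0) S ⟨le_rfl, fun x hx hx0 => ⟨1, by simpa using ⟨hx, hx0⟩⟩⟩
  exact ⟨E, hE⟩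

lemma Submodule.EssentialIn.injective_of_maximal [Module.Injective R Q] {E : Submodule R Q}
    (hE : Maximal S.EssentialIn E) : Module.Injective R E := by
  obtain ⟨K, -, hK⟩ := zorn_le_nonempty₀ {K | Disjoint K E} (fun c hc hchain K hK =>
    ⟨sSup c, hchain.directedOn.disjoint_sSup_left.2 fun K hK => hc hK, fun z hz => le_sSup hz⟩)
    ⊥ disjoint_bot_left
  have hπ : Function.Injective (K.mkQ ∘ₗ E.subtype) := by
    rw [← LinearMap.ker_eq_bot, eq_bot_iff]
    intro x hx
    have hxK : (x : Q) ∈ K := (Submodule.Quotient.mk_eq_zero K).1 hx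
    exact Subtype.ext (Submodule.disjoint_def.1 hK.prop _ hxK x.2)
  obtain ⟨h, hh⟩ := Module.Injective.out (K.mkQ ∘ₗ E.subtype) hπ E.subtype
  have hh' : ∀ x (hx : x ∈ E), h (K.mkQ x) = x := fun x hx => hh ⟨x, hx⟩
  have hK0 : ∀ x ∈ K, K.mkQ x = 0 := fun x hx => (Submodule.Quotient.mk_eq_zero K).2 hx
  have hrange : LinearMap.range (h ∘ₗ K.mkQ) ≤ E := by
    refine hE.le_of_ge ⟨fun x hx => ⟨x, hh' x (hE.prop.1 hx)⟩, ?_⟩ fun x hx => ⟨x, hh' x hx⟩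
    rintro _ ⟨q, rfl⟩ hq
    have hqK : q ∉ K := fun hqK => hq (by
      rw [LinearMap.comp_apply, hK0 q hqK, map_zero])
    have hnd : ¬ Disjoint (K ⊔ Submodule.span R {q}) E := fun hd =>
      hqK (hK.le_of_ge hd le_sup_left
        (le_sup_right (α := Submodule R Q) (Submodule.mem_span_singleton_self q)))
    rw [Submodule.disjoint_def] at hnd
    push Not at hnd
    obtain ⟨e, he, heE, he0⟩ := hnd
    obtain ⟨k, hk, y, hy, rfl⟩ := Submodule.mem_sup.1 he
    obtain ⟨r, rfl⟩ := Submodule.mem_span_singleton.1 hy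
    have hr : r • (h ∘ₗ K.mkQ) q = k + r • q := by
      rw [← hh' _ heE, map_add, hK0 k hk, zero_add, map_smul,
        map_smul]
      rfl
    obtain ⟨t, ht⟩ := hE.prop.2 _ heE he0
    exact ⟨t * r, by rwa [mul_smul, hr]⟩
  refine ⟨fun X Y _ _ _ _ f hf g => ?_⟩
  obtain ⟨φ, hφ⟩ := Module.Injective.out f hf (E.subtype ∘ₗ g)
  refine ⟨(h ∘ₗ K.mkQ ∘ₗ φ).codRestrict E fun y => hrange ⟨φ y, rfl⟩, fun x => Subtype.ext ?_⟩
  change h (K.mkQ (φ (f x))) = _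
  rw [hφ]
  exact hh' _ (g x).2

lemma Submodule.EssentialIn.finite [IsArtinianRing R] [Module.Finite R S] {E : Submodule R Q}
    (hE : S.EssentialIn E) : Module.Finite R E := by
  have key : ∀ (M : Type u) [AddCommGroup M] [Module R M], IsFiniteLength R M →
      IsNoetherian R (M →ₗ[R] E) := by
    intro M _ _ hM
    induction hM with
    | @of_subsingleton M _ _ _ => infer_instance
    | @of_simple_quotient M _ _ M' _ _ ih =>
      have hs : IsNoetherian R ((M ⧸ M') →ₗ[R] E) := by
        have hmem : ∀ (φ : (M ⧸ M') →ₗ[R] E) (x : M ⧸ M'), (φ x : Q) ∈ S := by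
          intro φ x
          by_cases hx : (φ x : Q) = 0
          · rw [hx]; exact S.zero_mem
          obtain ⟨r, hr, hr0⟩ := hE.2 _ (φ x).2 hx
          have hrx : r • x ≠ 0 := fun h => hr0 (by
            rw [← Submodule.coe_smul, ← map_smul, h, map_zero]; rfl)
          obtain ⟨t, ht⟩ := IsSimpleModule.toSpanSingleton_surjective R hrx x
          have ht' : x = t • r • x := ht.symm
          rw [ht', map_smul, map_smul]
          exact S.smul_mem t hr
        let Φ : ((M ⧸ M') →ₗ[R] E) →ₗ[R] ((M ⧸ M') →ₗ[R] S) :=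
          { toFun := fun φ => (E.subtype ∘ₗ φ).codRestrict S (hmem φ)
            map_add' := fun _ _ => rfl
            map_smul' := fun _ _ => rfl }
        refine isNoetherian_of_injective Φ fun φ ψ h => LinearMap.ext fun x => Subtype.ext ?_
        exact congrArg (fun y : S => (y : Q)) (LinearMap.congr_fun h x)
      refine isNoetherian_of_range_eq_ker (LinearMap.lcomp R E M'.mkQ)
        (LinearMap.lcomp R E M'.subtype) ?_
      ext φ
      constructor
      · rintro ⟨ψ, rfl⟩
        refine LinearMap.ext fun x => ?_
        change ψ (M'.mkQ x) = 0
        rw [show M'.mkQ (x : M) = 0 from (Submodule.Quotient.mk_eq_zero M').2 x.2, map_zero]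
      · intro hφ
        have hle : M' ≤ LinearMap.ker φ := fun x hx => LinearMap.congr_fun hφ ⟨x, hx⟩
        exact ⟨M'.liftQ φ hle, M'.liftQ_mkQ φ hle⟩
  have := key R (isFiniteLength_iff_isNoetherian_isArtinian.2 ⟨inferInstance, inferInstance⟩)
  have := isNoetherian_of_linearEquiv (LinearMap.ringLmapEquivSelf R R E)
  infer_instance

/-- A commutative artinian ring has a finitely generated injective cogenerator. -/
theorem exists_finite_injective_cogenerator (R : Type u) [CommRing R] [IsArtinianRing R] :
    ∃ E : ModuleCat.{u} R, Module.Finite R E ∧ Module.Injective R E ∧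
      ∀ (M : ModuleCat.{u} R) (m : M), m ≠ 0 → ∃ φ : M →ₗ[R] E, φ m ≠ 0 := by
  classical
  obtain ⟨⟨Q, hQ, i, hi⟩⟩ := EnoughInjectives.presentation
    (ModuleCat.of R (∀ m : MaximalSpectrum R, R ⧸ m.asIdeal))
  have := (Module.injective_iff_injective_object R Q).2 hQ
  have hi := (ModuleCat.mono_iff_injective i).1 hi
  obtain ⟨E, hE⟩ := Submodule.EssentialIn.exists_maximal (LinearMap.range i.hom)
  have hinj := Submodule.EssentialIn.injective_of_maximal hE
  refine ⟨ModuleCat.of R E, hE.prop.finite, hinj, fun M x hx => ?_⟩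
  have htop : LinearMap.ker (LinearMap.toSpanSingleton R M x) ≠ ⊤ := fun h => hx (by
    have : (1 : R) ∈ LinearMap.ker (LinearMap.toSpanSingleton R M x) := h ▸ Submodule.mem_top
    simpa using this)
  obtain ⟨m, hm, hle⟩ := Ideal.exists_le_maximal _ htop
  let J := LinearMap.ker (LinearMap.toSpanSingleton R M x)
  let f : (R ⧸ J) →ₗ[R] M := J.liftQ (LinearMap.toSpanSingleton R M x) le_rfl
  have hf : Function.Injective f := LinearMap.ker_eq_bot.1 (Submodule.ker_liftQ_eq_bot' _ _ rfl)
  let g : (R ⧸ J) →ₗ[R] E :=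
    (i.hom ∘ₗ LinearMap.single R (fun m : MaximalSpectrum R => R ⧸ m.asIdeal) ⟨m, hm⟩ ∘ₗ
      Submodule.factor hle).codRestrict E fun y => hE.prop.1 ⟨_, rfl⟩
  obtain ⟨φ, hφ⟩ := hinj.out f hf g
  refine ⟨φ, fun h0 => ?_⟩
  have h1 : f (J.mkQ 1) = x := by
    change (1 : R) • x = x
    exact one_smul _ _
  have h2 := hφ (J.mkQ 1)
  rw [h1, h0] at h2
  have h3 := hi ((congrArg Subtype.val h2).symm.trans (map_zero i.hom).symm)
  have h4 := congrFun h3 ⟨m, hm⟩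
  have h5 : m.mkQ 1 = 0 := (Pi.single_eq_same
    (M := fun m : MaximalSpectrum R => R ⧸ m.asIdeal) ⟨m, hm⟩ (m.mkQ 1)).symm.trans h4
  exact hm.ne_top ((Ideal.eq_top_iff_one m).2 ((Submodule.Quotient.mk_eq_zero m).1 h5))

end InjectiveCogenerator

section Coinduction

variable (R A : Type u) [CommRing R] [Ring A] [Algebra R A]

/-- The coinduced module `Hom_R(A, E)`. -/
def CoinducedModule (E : Type u) [AddCommGroup E] [Module R E] : Type u := A →ₗ[R] E

namespace CoinducedModule

variable (E : Type u) [AddCommGroup E] [Module R E]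

noncomputable instance : AddCommGroup (CoinducedModule R A E) :=
  inferInstanceAs (AddCommGroup (A →ₗ[R] E))

noncomputable instance : Module R (CoinducedModule R A E) :=
  inferInstanceAs (Module R (A →ₗ[R] E))

instance : FunLike (CoinducedModule R A E) A E :=
  inferInstanceAs (FunLike (A →ₗ[R] E) A E)

instance : LinearMapClass (CoinducedModule R A E) R A E :=
  inferInstanceAs (LinearMapClass (A →ₗ[R] E) R A E)

noncomputable instance : SMul A (CoinducedModule R A E) where
  smul a f := LinearMap.comp (show A →ₗ[R] E from f) (LinearMap.mulRight R a)

variable {R A E}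

lemma ext {f g : CoinducedModule R A E} (h : ∀ x, f x = g x) : f = g := DFunLike.ext f g h

lemma smul_apply (a : A) (f : CoinducedModule R A E) (x : A) : (a • f) x = f (x * a) := rfl

lemma scalar_smul_apply (r : R) (f : CoinducedModule R A E) (x : A) : (r • f) x = r • f x := rfl

noncomputable instance : Module A (CoinducedModule R A E) where
  one_smul f := ext fun x => by rw [smul_apply, mul_one]
  mul_smul a b f := ext fun x => by simp only [smul_apply, mul_assoc]
  smul_zero _ := rfl
  smul_add _ _ _ := rfl
  add_smul a b f := ext fun x => by rw [smul_apply, mul_add, map_add]; rfl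
  zero_smul f := ext fun x => by rw [smul_apply, mul_zero, map_zero]; rfl

instance : IsScalarTower R A (CoinducedModule R A E) where
  smul_assoc r a f := ext fun x => by
    rw [smul_apply, scalar_smul_apply, smul_apply, mul_smul_comm, map_smul]

/-- The `A`-linear map into a coinduced module corresponding to an `R`-linear map. -/
noncomputable def lift {Y : Type u} [AddCommGroup Y] [Module R Y] [Module A Y]
    [IsScalarTower R A Y] (h : Y →ₗ[R] E) : Y →ₗ[A] CoinducedModule R A E where
  toFun y := show A →ₗ[R] E from h ∘ₗ (LinearMap.toSpanSingleton A Y y).restrictScalars R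
  map_add' y z := ext fun x => (congrArg h (smul_add x y z)).trans (map_add h _ _)
  map_smul' a y := ext fun x => congrArg h (smul_smul x a y)

lemma lift_apply {Y : Type u} [AddCommGroup Y] [Module R Y] [Module A Y]
    [IsScalarTower R A Y] (h : Y →ₗ[R] E) (y : Y) (a : A) :
    lift (A := A) h y a = h (a • y) := rfl

instance [Module.Injective R E] : Module.Injective A (CoinducedModule R A E) where
  out X Y _ _ _ _ f hf g := by
    let _ := Module.compHom X (algebraMap R A)
    let _ := Module.compHom Y (algebraMap R A)
    have : IsScalarTower R A X := .of_algebraMap_smul fun _ _ => rfl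
    have : IsScalarTower R A Y := .of_algebraMap_smul fun _ _ => rfl
    let ε : X →ₗ[R] E :=
      { toFun := fun x => g x 1
        map_add' := fun x y => by rw [map_add]; rfl
        map_smul' := fun r x => by
          rw [LinearMap.map_smul_of_tower]; rfl }
    obtain ⟨h, hh⟩ := Module.Injective.out (f.restrictScalars R) hf ε
    refine ⟨lift h, fun x => ext fun a => ?_⟩
    rw [lift_apply, ← map_smul]
    refine (hh (a • x)).trans ?_
    change g (a • x) 1 = _
    rw [map_smul, smul_apply, one_mul]

instance [IsNoetherianRing R] [Module.Finite R A] [Module.Finite R E] :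
    Module.Finite A (CoinducedModule R A E) := by
  have : Module.Finite R (CoinducedModule R A E) := inferInstanceAs (Module.Finite R (A →ₗ[R] E))
  exact Module.Finite.of_restrictScalars_finite R A _

end CoinducedModule

lemma exists_injective_pi_of_separating {A : Type u} [Ring A] {M I : ModuleCat.{u} A}
    [IsArtinian A M] (h : ∀ m : M, m ≠ 0 → ∃ φ : M →ₗ[A] I, φ m ≠ 0) :
    ∃ (n : ℕ) (f : M →ₗ[A] (Fin n → I)), Function.Injective f := by
  obtain ⟨_, ⟨n, f, rfl⟩, hmin⟩ := IsArtinian.set_has_minimal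
    {K | ∃ (n : ℕ) (f : Fin n → M →ₗ[A] I), K = LinearMap.ker (LinearMap.pi f)}
    ⟨_, 0, Fin.elim0, rfl⟩
  refine ⟨n, LinearMap.pi f, LinearMap.ker_eq_bot.1 ((Submodule.eq_bot_iff _).2 fun x hx => ?_)⟩
  by_contra hx0
  obtain ⟨φ, hφ⟩ := h x hx0
  refine hmin _ ⟨n + 1, Fin.cons φ f, rfl⟩ (lt_of_le_of_ne (fun y hy => ?_) fun he => ?_)
  · exact funext fun i => congrFun (LinearMap.mem_ker.1 hy) i.succ
  · rw [← he] at hx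
    exact hφ (congrFun (LinearMap.mem_ker.1 hx) 0)

/-- An artin algebra has a finitely generated injective cogenerator. -/
theorem exists_injective_cogenerator_of_artin_algebra [IsArtinianRing R] [Module.Finite R A] :
    ∃ I : ModuleCat.{u} A, Module.Finite A I ∧ Injective I ∧
      ∀ M : ModuleCat.{u} A, Module.Finite A M →
        ∃ (n : ℕ) (f : M →ₗ[A] (Fin n → I)), Function.Injective f := by
  obtain ⟨E, hfin, hinj, hE⟩ := exists_finite_injective_cogenerator R
  have : IsArtinianRing A := IsArtinianRing.of_finite R A
  refine ⟨ModuleCat.of A (CoinducedModule R A E), ?_, ?_, fun M hM => ?_⟩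
  · exact inferInstanceAs (Module.Finite A (CoinducedModule R A E))
  · exact (Module.injective_iff_injective_object A _).1 inferInstance
  · refine exists_injective_pi_of_separating fun m hm => ?_
    let _ := Module.compHom M (algebraMap R A)
    have : IsScalarTower R A M := .of_algebraMap_smul fun _ _ => rfl
    obtain ⟨φ, hφ⟩ := hE (ModuleCat.of R M) m hm
    refine ⟨CoinducedModule.lift φ, fun h => hφ ?_⟩
    have := DFunLike.congr_fun (F := CoinducedModule R A E) h 1
    rwa [CoinducedModule.lift_apply, one_smul] at this

end Coinduction

/-- If `𝒫` is contravariantly finite, the direct sum of a complete set of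
representatives of the indecomposable Ext-injective modules in `𝒫` is a tilting module. -/
theorem stmt_3 (Λ : Type u) [Ring Λ] (R : Type u) [CommRing R] [IsArtinianRing R]
    [Algebra R Λ] [Module.Finite R Λ]
    (hcf : ContravariantlyFinite (fun M : ModuleCat.{u} Λᵐᵒᵖ => InP M))
    {ι : Type u} (F : ι → ModuleCat.{u} Λᵐᵒᵖ) (hF : IsCompleteExtInjFamily F) :
    IsTilting (ModuleCat.of Λᵐᵒᵖ (DirectSum ι (fun i => ↥(F i)))) := by
  classical
  have : Module.Finite R Λᵐᵒᵖ := inferInstance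
  have : IsArtinianRing Λᵐᵒᵖ := IsArtinianRing.of_finite R Λᵐᵒᵖ
  have : IsNoetherianRing Λᵐᵒᵖ := IsNoetherianRing.of_finite R Λᵐᵒᵖ
  obtain ⟨I, hI, hI', hcog⟩ := exists_injective_cogenerator_of_artin_algebra R Λᵐᵒᵖ
  obtain ⟨X, hX, hXcog⟩ := hcf.exists_relative_cogenerator I hcog
  have hfin := hX.1.1
  have hloc : ∀ i, IsLocalRing (Module.End Λᵐᵒᵖ (F i)) := fun i => by
    have := (hF.1 i).2.1.1
    exact (hF.1 i).1.isLocalRing_end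
  have hι : Finite ι := by
    have := finite_setOf_isSummand F (fun i => (hF.1 i).1) hloc hF.2.2 X
    rw [← Set.finite_univ_iff]
    refine this.subset fun i _ => ?_
    obtain ⟨n, h⟩ := hX.exists_isSummand_pi hXcog (hF.1 i).2
    have := hloc i
    exact h.of_isSummand_pi_const
  have hT := ExtInjInP.directSum F fun i => (hF.1 i).2
  have hadd : ∀ M : ModuleCat.{u} Λᵐᵒᵖ, ExtInjInP M → InAddOf
      (fun X => X = ModuleCat.of Λᵐᵒᵖ (DirectSum ι (fun i => ↥(F i)))) M := by
    refine fun M hM => hM.inAddOf fun N hN hN' => ?_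
    obtain ⟨i, ⟨e⟩⟩ := hF.2.1 N hN hN'
    refine (IsSummand.of_linearEquiv e).trans
      ⟨DirectSum.lof Λᵐᵒᵖ ι (fun i => F i) i, DirectSum.component Λᵐᵒᵖ ι (fun i => F i) i, ?_⟩
    exact LinearMap.ext fun x => DirectSum.component.lof_self Λᵐᵒᵖ (M := fun i => F i) i x
  obtain ⟨d, hd⟩ := hcf.exists_forall_hasProjectiveDimensionLT
  refine ⟨hT.1.1, hT.1.2, fun i hi => ?_, ?_⟩
  · obtain ⟨j, rfl⟩ := Nat.exists_eq_add_of_le' hi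
    exact (subsingleton_ext_iff _ _ j).2
      (extZero_succ_of_forall_inP ((extInjInP_iff _).1 hT).2 j _ hT.1)
  · refine InP.hasAddCoresolution hX hXcog hadd d _ (InP.of_projective _) fun N hN i hi => ?_
    have := hd N hN
    exact HasProjectiveDimensionLT.subsingleton N d (i + 1) (by omega) _
end

section
/- Let Λ be an artin algebra and T a tilting Λ-module. Then for each module M in T^⊥ there exists a short exact sequence 0 → K_0 → T_0 → M → 0 with T_0 in Add T and K_0 in T^⊥. -/
open CategoryTheory

universe u

open Limits

section AbelianExt

variable {C : Type*} [Category* C] [Abelian C] [HasExt C]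

lemma subsingleton_ext_X₁ {S : ShortComplex C} (hS : S.ShortExact) (Y : C) (k : ℕ)
    (h₂ : Subsingleton (Abelian.Ext S.X₂ Y k)) (h₃ : Subsingleton (Abelian.Ext S.X₃ Y (k + 1))) :
    Subsingleton (Abelian.Ext S.X₁ Y k) := by
  refine subsingleton_of_forall_eq 0 fun x ↦ ?_
  obtain ⟨y, rfl⟩ :=
    Abelian.Ext.contravariant_sequence_exact₁ hS Y x (add_comm 1 k) (Subsingleton.elim _ _)
  rw [Subsingleton.elim y 0, Abelian.Ext.comp_zero]

lemma subsingleton_ext_X₃ {S : ShortComplex C} (hS : S.ShortExact) (Y : C) (k : ℕ)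
    (h₁ : Subsingleton (Abelian.Ext S.X₁ Y k)) (h₂ : Subsingleton (Abelian.Ext S.X₂ Y (k + 1))) :
    Subsingleton (Abelian.Ext S.X₃ Y (k + 1)) := by
  refine subsingleton_of_forall_eq 0 fun x ↦ ?_
  obtain ⟨y, rfl⟩ :=
    Abelian.Ext.contravariant_sequence_exact₃ hS Y x (Subsingleton.elim _ _) (add_comm 1 k)
  rw [Subsingleton.elim y 0, Abelian.Ext.comp_zero]

lemma exists_extension_of_subsingleton_ext {S : ShortComplex C} (hS : S.ShortExact) {Y : C}
    (h₃ : Subsingleton (Abelian.Ext S.X₃ Y 1)) (h : S.X₁ ⟶ Y) : ∃ g : S.X₂ ⟶ Y, S.f ≫ g = h := by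
  obtain ⟨y, hy⟩ := Abelian.Ext.contravariant_sequence_exact₁ hS Y (Abelian.Ext.mk₀ h)
    (add_zero 1) (Subsingleton.elim _ _)
  obtain ⟨g, rfl⟩ := (Abelian.Ext.mk₀_bijective _ _).2 y
  rw [Abelian.Ext.mk₀_comp_mk₀] at hy
  exact ⟨g, (Abelian.Ext.mk₀_bijective _ _).1 hy⟩

lemma subsingleton_ext_one_of_exists_extension {S : ShortComplex C} (hS : S.ShortExact) {Y : C}
    (h₂ : Subsingleton (Abelian.Ext S.X₂ Y 1)) (h : ∀ h : S.X₁ ⟶ Y, ∃ g : S.X₂ ⟶ Y, S.f ≫ g = h) :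
    Subsingleton (Abelian.Ext S.X₃ Y 1) := by
  refine subsingleton_of_forall_eq 0 fun x ↦ ?_
  obtain ⟨y, rfl⟩ :=
    Abelian.Ext.contravariant_sequence_exact₃ hS Y x (Subsingleton.elim _ _) (add_zero 1)
  obtain ⟨f, rfl⟩ := (Abelian.Ext.mk₀_bijective _ _).2 y
  obtain ⟨g, rfl⟩ := h f
  rw [← Abelian.Ext.mk₀_comp_mk₀, ← Abelian.Ext.comp_assoc_of_second_deg_zero,
    hS.extClass_comp, Abelian.Ext.zero_comp]

lemma subsingleton_ext_kernel {S : ShortComplex C} (hS : S.ShortExact) (X : C)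
    (h₂ : ∀ k, Subsingleton (Abelian.Ext X S.X₂ (k + 1)))
    (h₃ : ∀ k, Subsingleton (Abelian.Ext X S.X₃ (k + 1)))
    (h : ∀ g : X ⟶ S.X₃, ∃ f : X ⟶ S.X₂, f ≫ S.g = g) (k : ℕ) :
    Subsingleton (Abelian.Ext X S.X₁ (k + 1)) := by
  refine subsingleton_of_forall_eq 0 fun x ↦ ?_
  obtain ⟨y, rfl⟩ :=
    Abelian.Ext.covariant_sequence_exact₁ X hS x ((h₂ k).elim _ _) rfl
  obtain _ | k := k
  · obtain ⟨g, rfl⟩ := (Abelian.Ext.mk₀_bijective _ _).2 y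
    obtain ⟨f, rfl⟩ := h g
    rw [← Abelian.Ext.mk₀_comp_mk₀, Abelian.Ext.comp_assoc_of_second_deg_zero,
      hS.comp_extClass, Abelian.Ext.comp_zero]
  · rw [(h₃ k).elim y 0, Abelian.Ext.zero_comp]

lemma subsingleton_ext_of_sum_eq_id {J : Type*} [Fintype J] {X Y : C} {F : J → C}
    (a : ∀ j, X ⟶ F j) (b : ∀ j, F j ⟶ X) (hab : ∑ j, a j ≫ b j = 𝟙 X) (k : ℕ)
    (hF : ∀ j, Subsingleton (Abelian.Ext (F j) Y k)) : Subsingleton (Abelian.Ext X Y k) := by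
  refine subsingleton_of_forall_eq 0 fun x ↦ ?_
  rw [← Abelian.Ext.mk₀_id_comp x, ← hab, Abelian.Ext.mk₀_sum, Abelian.Ext.sum_comp]
  refine Finset.sum_eq_zero fun j _ ↦ ?_
  rw [← Abelian.Ext.mk₀_comp_mk₀_assoc,
    (hF j).elim ((Abelian.Ext.mk₀ (b j)).comp x (zero_add k)) 0, Abelian.Ext.comp_zero]

end AbelianExt

section ModuleExt

variable {A : Type u} [Ring A]

lemma subsingleton_ext_succ_iff (M N : ModuleCat.{u} A) (n : ℕ) :
    Subsingleton (ext M N (n + 1)) ↔ Subsingleton (Abelian.Ext M N (n + 1)) := by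
  let P : ProjectiveResolution M := projectiveResolution M
  have h₁ : Subsingleton (ext M N (n + 1)) ↔ ∀ f : P.complex.X (n + 1) ⟶ N,
      P.complex.d (n + 2) (n + 1) ≫ f = 0 →
        ∃ g : P.complex.X n ⟶ N, P.complex.d (n + 1) n ≫ g = f := by
    rw [← ModuleCat.isZero_iff_subsingleton, (P.isoExt (n + 1) N).isZero_iff,
      ← HomologicalComplex.exactAt_iff_isZero_homology,
      HomologicalComplex.exactAt_iff' _ n (n + 1) (n + 2) (by simp) (by simp),
      ShortComplex.moduleCat_exact_iff]
    rfl
  rw [h₁]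
  constructor
  · intro h
    refine subsingleton_of_forall_eq 0 fun x ↦ ?_
    obtain ⟨f, hf, rfl⟩ := P.extMk_surjective x (n + 2) rfl
    exact (P.extMk_eq_zero_iff f _ rfl hf n rfl).2 (h f hf)
  · intro h f hf
    exact (P.extMk_eq_zero_iff f _ rfl hf n rfl).1 (Subsingleton.elim _ _)

lemma extVanish_iff (M N : ModuleCat.{u} A) :
    ExtVanish M N ↔ ∀ k, Subsingleton (Abelian.Ext M N (k + 1)) := by
  simp_rw [← subsingleton_ext_succ_iff]
  refine ⟨fun h k ↦ h _ k.succ_pos, fun h i hi ↦ ?_⟩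
  obtain ⟨k, rfl⟩ := Nat.exists_eq_succ_of_ne_zero hi.ne'
  exact h k

lemma subsingleton_ext_of_inAddOf {T X Y : ModuleCat.{u} A} (hX : InAddOf (fun Z ↦ Z = T) X)
    (k : ℕ) (hT : Subsingleton (Abelian.Ext T Y k)) : Subsingleton (Abelian.Ext X Y k) := by
  obtain ⟨m, F, hF, s, r, hrs⟩ := hX
  refine subsingleton_ext_of_sum_eq_id
    (fun j ↦ ModuleCat.ofHom (DirectSum.component A (Fin m) (fun i ↦ F i) j ∘ₗ s))
    (fun j ↦ ModuleCat.ofHom (r ∘ₗ DirectSum.lof A (Fin m) (fun i ↦ F i) j)) ?_ k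
    fun j ↦ hF j ▸ hT
  ext x
  have h : ∑ j, DirectSum.lof A (Fin m) (fun i ↦ F i) j (s x j) = s x :=
    DirectSum.sum_univ_of (s x)
  have h' := congrArg r h
  rw [map_sum] at h'
  simpa [ModuleCat.hom_sum, ← DirectSum.apply_eq_component] using h'.trans (LinearMap.congr_fun hrs x)

open DirectSum in
/-- A linear map from a finite module to a direct sum extends along `i` as soon as its components
do. -/
lemma exists_extension_directSum {L P : Type*} [AddCommGroup L] [Module A L] [Module.Finite A L]
    [AddCommGroup P] [Module A P] (i : L →ₗ[A] P) {ι : Type*} {Y : ι → Type*}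
    [∀ j, AddCommGroup (Y j)] [∀ j, Module A (Y j)]
    (h : ∀ j (f : L →ₗ[A] Y j), ∃ g : P →ₗ[A] Y j, g ∘ₗ i = f) (f : L →ₗ[A] ⨁ j, Y j) :
    ∃ g : P →ₗ[A] ⨁ j, Y j, g ∘ₗ i = f := by
  classical
  obtain ⟨S, hS⟩ := (Module.Finite.fg_top : (⊤ : Submodule A L).FG)
  choose g hg using fun j ↦ h j (DirectSum.component A ι Y j ∘ₗ f)
  let J : Finset ι := S.biUnion fun x ↦ (f x).support
  refine ⟨∑ j ∈ J, DirectSum.lof A ι Y j ∘ₗ g j, LinearMap.ext_on hS fun x hx ↦ ?_⟩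
  have hJ : (f x).support ⊆ J := Finset.subset_biUnion_of_mem (fun x ↦ (f x).support) hx
  have hgx : ∀ j, g j (i x) = f x j := fun j ↦ LinearMap.congr_fun (hg j) x
  simp only [LinearMap.comp_apply, LinearMap.sum_apply, hgx]
  conv_rhs => rw [← DirectSum.sum_support_of (f x)]
  refine (Finset.sum_subset hJ fun j _ hj ↦ ?_).symm
  rw [DFinsupp.notMem_support_iff.1 hj, map_zero]

open DirectSum in
/-- Over a noetherian ring, `Ext`-vanishing from a finite module passes to direct sums. -/
lemma subsingleton_ext_directSum [IsNoetherianRing A] {ι : Type u} (Y : ι → ModuleCat.{u} A)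
    (k : ℕ) (N : ModuleCat.{u} A) (hN : Module.Finite A N)
    (h : ∀ j, Subsingleton (Abelian.Ext N (Y j) (k + 1))) :
    Subsingleton (Abelian.Ext N (ModuleCat.of A (⨁ j, Y j)) (k + 1)) := by
  induction k generalizing N with
  | zero =>
    obtain ⟨n, p, hp⟩ := Module.Finite.exists_fin' A N
    have hS := LinearMap.shortExact_shortComplexKer hp
    have : Projective p.shortComplexKer.X₂ := ModuleCat.projective_of_free (Pi.basisFun A (Fin n))
    refine subsingleton_ext_one_of_exists_extension hS
      (Abelian.Ext.subsingleton_of_projective _ _ _) fun f ↦ ?_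
    obtain ⟨g, hg⟩ := exists_extension_directSum (Y := fun j ↦ Y j) (LinearMap.ker p).subtype
      (fun j f ↦ by
        obtain ⟨g, hg⟩ := exists_extension_of_subsingleton_ext hS (h j) (ModuleCat.ofHom f)
        exact ⟨g.hom, congrArg ModuleCat.Hom.hom hg⟩) f.hom
    exact ⟨ModuleCat.ofHom g, ModuleCat.hom_ext hg⟩
  | succ k ih =>
    obtain ⟨n, p, hp⟩ := Module.Finite.exists_fin' A N
    have hS := LinearMap.shortExact_shortComplexKer hp
    have : Projective p.shortComplexKer.X₂ := ModuleCat.projective_of_free (Pi.basisFun A (Fin n))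
    refine subsingleton_ext_X₃ hS _ _ (ih _ ?_ fun j ↦ ?_)
      (Abelian.Ext.subsingleton_of_projective _ _ _)
    · exact inferInstanceAs (Module.Finite A (LinearMap.ker p))
    · exact subsingleton_ext_X₁ hS _ _ (Abelian.Ext.subsingleton_of_projective _ _ _) (h j)

/-- The short complex `X → Y → ker h` attached to linear maps `X → Y → Z`. -/
def toKerShortComplex {X Y Z W : ModuleCat.{u} A} (f : X →ₗ[A] Y) (g : Y →ₗ[A] Z)
    (h : Z →ₗ[A] W) (hfg : Function.Exact f g) (hgh : Function.Exact g h) :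
    ShortComplex (ModuleCat.{u} A) where
  X₁ := X
  X₂ := Y
  X₃ := ModuleCat.of A (LinearMap.ker h)
  f := ModuleCat.ofHom f
  g := ModuleCat.ofHom (g.codRestrict _ fun y ↦ (hgh (g y)).2 ⟨y, rfl⟩)
  zero := by
    ext x
    exact (hfg (f x)).2 ⟨x, rfl⟩

lemma shortExact_toKerShortComplex {X Y Z W : ModuleCat.{u} A} {f : X →ₗ[A] Y} {g : Y →ₗ[A] Z}
    {h : Z →ₗ[A] W} (hf : Function.Injective f) (hfg : Function.Exact f g)
    (hgh : Function.Exact g h) : (toKerShortComplex f g h hfg hgh).ShortExact where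
  exact := (ShortComplex.ShortExact.moduleCat_exact_iff_function_exact _).2 fun y ↦
    Subtype.ext_iff.trans (hfg y)
  mono_f := (ModuleCat.mono_iff_injective _).2 hf
  epi_g := (ModuleCat.epi_iff_surjective _).2 fun z ↦ by
    obtain ⟨y, hy⟩ := (hgh z.1).1 z.2
    exact ⟨y, Subtype.ext hy⟩

/-- If `L` has an `add T`-coresolution and `M ∈ T^⊥`, then every map `L → M` factors through an
object of `add T`. -/
lemma exists_factorization_of_hasAddCoresolution {T L M : ModuleCat.{u} A}
    (hL : HasAddCoresolution T L) (hM : ExtVanish T M) (φ : L →ₗ[A] M) :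
    ∃ (C : ModuleCat.{u} A) (f : L →ₗ[A] C) (g : C →ₗ[A] M),
      InAddOf (fun X ↦ X = T) C ∧ g ∘ₗ f = φ := by
  obtain ⟨C, d, f, hf, hfd, hd, hC, m, hm⟩ := hL
  rw [extVanish_iff] at hM
  have hCM (i k : ℕ) : Subsingleton (Abelian.Ext (C i) M (k + 1)) :=
    subsingleton_ext_of_inAddOf (hC i) _ (hM k)
  have hker (j : ℕ) : ∀ i, m ≤ i + j → ∀ k,
      Subsingleton (Abelian.Ext (ModuleCat.of A (LinearMap.ker (d i))) M (k + 1)) := by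
    induction j with
    | zero =>
      intro i hi k
      have := hm i hi
      have : IsZero (ModuleCat.of A (LinearMap.ker (d i))) :=
        ModuleCat.isZero_iff_subsingleton.2 (inferInstanceAs (Subsingleton (LinearMap.ker (d i))))
      have := this.projective
      exact Abelian.Ext.subsingleton_of_projective _ _ _
    | succ j ih =>
      intro i hi k
      have hex : Function.Exact (LinearMap.ker (d i)).subtype (d i) := fun x ↦ by simp
      exact subsingleton_ext_X₁
        (shortExact_toKerShortComplex (X := ModuleCat.of A (LinearMap.ker (d i)))
          Subtype.val_injective hex (hd i)) M (k + 1) (hCM i k) (ih (i + 1) (by lia) (k + 1))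
  obtain ⟨g, hg⟩ := exists_extension_of_subsingleton_ext
    (shortExact_toKerShortComplex hf hfd (hd 0)) (hker m 1 (by lia) 0) (ModuleCat.ofHom φ)
  exact ⟨C 0, f, g.hom, hC 0, congrArg ModuleCat.Hom.hom hg⟩

open DirectSum in
/-- The evaluation map `T^(Hom(T, M)) → M`. -/
noncomputable def evalDirectSum (T M : ModuleCat.{u} A) :
    (⨁ _ : T →ₗ[A] M, T) →ₗ[A] M :=
  letI := Classical.decEq (T →ₗ[A] M)
  DirectSum.toModule A _ _ fun g ↦ g

lemma exists_evalDirectSum_comp_eq {T M : ModuleCat.{u} A} (g : T →ₗ[A] M) :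
    ∃ h, evalDirectSum T M ∘ₗ h = g := by
  let := Classical.decEq (T →ₗ[A] M)
  exact ⟨DirectSum.lof A _ (fun _ ↦ T) g, LinearMap.ext fun x ↦
    DirectSum.toModule_lof A (φ := fun g : T →ₗ[A] M ↦ g) g x⟩

lemma evalDirectSum_surjective {T M : ModuleCat.{u} A}
    (hT : HasAddCoresolution T (ModuleCat.of A A)) (hM : ExtVanish T M) :
    Function.Surjective (evalDirectSum T M) := by
  intro y
  obtain ⟨C, f, g, ⟨m, F, hF, s, r, hrs⟩, hfg⟩ :=
    exists_factorization_of_hasAddCoresolution hT hM (LinearMap.toSpanSingleton A M y)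
  have hy : (g ∘ₗ r) (s (f (1 : A))) = y :=
    (congrArg g (LinearMap.congr_fun hrs _)).trans
      ((LinearMap.congr_fun hfg (1 : A)).trans (one_smul A y))
  rw [← LinearMap.mem_range, ← hy]
  induction s (f (1 : A)) using DirectSum.induction_on with
  | zero => simp
  | of i x =>
    have key : ∀ (Z : ModuleCat.{u} A), Z = T → ∀ (h : Z →ₗ[A] M) (z : Z),
        h z ∈ LinearMap.range (evalDirectSum T M) := by
      rintro _ rfl h z
      obtain ⟨q, rfl⟩ := exists_evalDirectSum_comp_eq h
      exact ⟨q z, rfl⟩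
    exact key _ (hF i) ((g ∘ₗ r) ∘ₗ DirectSum.lof A (Fin m) (fun i ↦ F i) i) x
  | add a b ha hb =>
    rw [map_add]
    exact add_mem ha hb

end ModuleExt

/-- For a tilting module `T` and `M ∈ T^⊥` there is a short exact sequence
`0 → K₀ → T₀ → M → 0` with `T₀ ∈ Add T` and `K₀ ∈ T^⊥`. -/
theorem stmt_5 (Λ : Type u) [Ring Λ] (R : Type u) [CommRing R] [IsArtinianRing R]
    [Algebra R Λ] [Module.Finite R Λ]
    (T : ModuleCat.{u} Λᵐᵒᵖ) (hT : IsTilting T)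
    (M : ModuleCat.{u} Λᵐᵒᵖ) (hM : ExtVanish T M) :
    ∃ (K T₀ : ModuleCat.{u} Λᵐᵒᵖ) (i : K →ₗ[Λᵐᵒᵖ] T₀) (p : T₀ →ₗ[Λᵐᵒᵖ] M),
      InAdd T T₀ ∧ ExtVanish T K ∧ ShortExact i p := by
  have : IsNoetherianRing Λᵐᵒᵖ := .of_finite R Λᵐᵒᵖ
  obtain ⟨hfin, -, hTT, hres⟩ := hT
  have hp := evalDirectSum_surjective hres hM
  refine ⟨ModuleCat.of _ (LinearMap.ker (evalDirectSum T M)), ModuleCat.of _ _,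
    (LinearMap.ker (evalDirectSum T M)).subtype, evalDirectSum T M,
    ⟨T →ₗ[Λᵐᵒᵖ] M, LinearMap.id, LinearMap.id, rfl⟩, ?_,
    Subtype.val_injective, fun x ↦ by simp, hp⟩
  rw [extVanish_iff] at hTT hM ⊢
  refine subsingleton_ext_kernel (LinearMap.shortExact_shortComplexKer hp) T
    (fun k ↦ subsingleton_ext_directSum _ k T hfin fun _ ↦ hTT k) hM fun g ↦ ?_
  obtain ⟨f, hf⟩ := exists_evalDirectSum_comp_eq g.hom
  exact ⟨ModuleCat.ofHom f, ModuleCat.hom_ext hf⟩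
end
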